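/- arXiv:1509.08318 — 4 statements merged into one kernel-verified Lean document; each statement's English description precedes it below -/
import Mathlib

section
/- Let A be a unital C*-algebra with stable rank one and strict comparison of positive elements with respect to bounded traces. Suppose a₁, a₂ ∈ A are positive contractions such that for every tracial state τ on A and every nonzero continuous function h : [0,1] → [0,∞) with h(0) = 0 one has τ(h(a₁)) = τ(h(a₂)) > 0. Then a₁ and a₂ are approximately unitarily equivalent: for every ε > 0 there is a unitary u ∈ A with ‖u a₁ u* − a₂‖ ≤ ε. -/
open scoped ComplexOrder ENNReal

set_option synthInstance.maxHeartbeats 1000000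
set_option maxHeartbeats 1000000

noncomputable section

/-- Tracial states on a unital C*-algebra. -/
def IsTracialState {B : Type} [CStarAlgebra B] (τ : B →L[ℂ] ℂ) : Prop :=
  τ 1 = 1 ∧ (∀ b : B, (∃ y, b = star y * y) → 0 ≤ τ b) ∧ ∀ a b : B, τ (a * b) = τ (b * a)

/-- The C*-norm on a complex star algebra (such as a matrix algebra over a C*-algebra),
defined via the spectral radius; this recovers the unique C*-norm when one exists. -/
def cstarNorm {B : Type} [Ring B] [StarRing B] [Algebra ℂ B] (a : B) : ℝ :=
  Real.sqrt (spectralRadius ℂ (star a * a)).toReal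

/-- `a` is Cuntz below `b` (in a matrix algebra over a C*-algebra):
`a = lim xₙ b xₙ*`, with respect to the C*-norm. -/
def CuntzBelowIn {B : Type} [Ring B] [StarRing B] [Algebra ℂ B] (a b : B) : Prop :=
  ∃ x : ℕ → B,
    Filter.Tendsto (fun n => cstarNorm (a - x n * b * star (x n))) Filter.atTop (nhds 0)

/-- `L = d_{τ⊗Trₖ}(a) = limₙ (τ⊗Trₖ)(a^{1/n})`, encoded via a sequence of positive `n`-th
roots of `a` (which are unique when they exist, so this determines `L`). -/
def IsDLimit {A : Type} [CStarAlgebra A] {k : ℕ} (τ : A →L[ℂ] ℂ)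
    (a : Matrix (Fin k) (Fin k) A) (L : ℝ) : Prop :=
  ∃ r : ℕ → Matrix (Fin k) (Fin k) A,
    (∀ n, (∃ y : Matrix (Fin k) (Fin k) A, r n = star y * y) ∧ r n ^ (n + 1) = a) ∧
    Filter.Tendsto (fun n => ∑ i, τ (r n i i)) Filter.atTop (nhds (L : ℂ))

/-- Strict comparison of positive elements with respect to bounded traces: for positive
matrices `a, b` over `A`, if `d_{τ⊗Trₖ}(a) < d_{τ⊗Trₖ}(b)` for every tracial state `τ`,
then `a` is Cuntz below `b`. -/
def StrictComparison (A : Type) [CStarAlgebra A] : Prop :=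
  ∀ (k : ℕ) (a b : Matrix (Fin k) (Fin k) A),
    (∃ y : Matrix (Fin k) (Fin k) A, a = star y * y) →
    (∃ y : Matrix (Fin k) (Fin k) A, b = star y * y) →
    (∀ (τ : A →L[ℂ] ℂ), IsTracialState τ → ∀ (La Lb : ℝ),
      IsDLimit τ a La → IsDLimit τ b Lb → La < Lb) →
    CuntzBelowIn a b

/-!
Cut a positive contraction `a` into the ramps `hᵢ(a)`, `i < N`, where `hᵢ` climbs from `0` to `1` on
the `i`-th of `N` equal subintervals of `[0, 1]`, counted from the top: then `N a = ∑ hᵢ(a)`, and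
each `hⱼ(a)` is a unit for `hᵢ(a)` whenever `i < j`. Equality and strict positivity of the traces
give `d_τ(hᵢ(a₁)) ≤ τ(hᵢ₊₁(a₁)) < τ(hᵢ₊₂(a₂)) ≤ d_τ(hᵢ₊₂(a₂))`, so strict comparison makes
`hᵢ(a₁)` Cuntz below `hᵢ₊₂(a₂)`, and vice versa.

In stable rank one a Cuntz subequivalence is approximately implemented by a unitary, namely the
polar part of a nearby invertible element, and this unitary can be corrected so that it almost fixes
any rungs already lying below. Alternately rotating the two families therefore threads a zigzag
through both of them, in which every sixth rung of one is almost a unit for the preceding rung of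
the other. Hence each rotated ramp of one element lies below the ramp of the other `24` rungs
higher, up to a small error, and summing gives `u a₁ u* ≤ a₂ + 24 / N + δ` and
`a₂ ≤ u a₁ u* + 24 / N + δ`.
-/

section StableRankOne

open Unitary

variable {A : Type*} [CStarAlgebra A]

theorem norm_conj_sub_le {s : unitary A} {e : A} {η : ℝ} (he : IsSelfAdjoint e)
    (hs : ‖s * e - e‖ ≤ η) : ‖conjStarAlgAut ℂ A s e - e‖ ≤ 2 * η := by
  have hs' : ‖e * star (s : A) - e‖ ≤ η := by
    have hadjoint : e * star (s : A) - e = star (s * e - e) := by simp [he.star_eq]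
    rwa [hadjoint, norm_star]
  have hsplit : conjStarAlgAut ℂ A s e - e =
      (s * e - e) * ((star s : unitary A) : A) + (e * star (s : A) - e) := by
    simp [sub_mul]
  rw [hsplit, two_mul]
  exact norm_add_le_of_le (by rwa [CStarRing.norm_mul_coe_unitary]) hs'

theorem star_unitary_mul_cancel_left (u : unitary A) (x : A) : star (u : A) * (u * x) = x := by
  rw [← mul_assoc, coe_star_mul_self, one_mul]

theorem norm_conj_star_mul_sub_le {w v : unitary A} {e : A} {η : ℝ} (he : IsSelfAdjoint e)
    (hvw : ‖v * e - w * e‖ ≤ η) : ‖conjStarAlgAut ℂ A (star w * v) e - e‖ ≤ 2 * η := by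
  refine norm_conj_sub_le he ?_
  have hfactor : (star w * v : unitary A) * e - e = (star w : unitary A) * (v * e - w * e) := by
    simp [mul_sub, mul_assoc, star_unitary_mul_cancel_left]
  rwa [hfactor, CStarRing.norm_coe_unitary_mul]

theorem norm_conj_star_mul_mul_sub_le {w v : unitary A} {q p : A} {η δ : ℝ}
    (hq : IsSelfAdjoint q) (hp : ‖p‖ ≤ 1) (hv : ‖v * (1 - q) - (1 - q)‖ ≤ η)
    (hw : ‖(1 - q) * (w * p)‖ ≤ δ) :
    ‖conjStarAlgAut ℂ A (star w * v) q * p - p‖ ≤ η + δ := by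
  have hv' : ‖(1 - q) * star (v : A) - (1 - q)‖ ≤ η := by
    have hadjoint : (1 - q) * star (v : A) - (1 - q) = star (v * (1 - q) - (1 - q)) := by
      simp [hq.star_eq]
    rwa [hadjoint, norm_star]
  have hsplit : conjStarAlgAut ℂ A (star w * v) q * p - p =
      -((star w * v : unitary A) *
        (((1 - q) * star (v : A) - (1 - q)) * (w * p) + (1 - q) * (w * p))) := by
    have hcancel : (v : A) * (star (v : A) * (w * p)) = w * p := by
      simpa using star_unitary_mul_cancel_left (star v) (w * p : A)
    simp [sub_mul, mul_sub, mul_assoc, hcancel, star_unitary_mul_cancel_left]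
  rw [hsplit, norm_neg, CStarRing.norm_coe_unitary_mul]
  exact (norm_add_le_of_le (norm_mul_le_of_le hv'
    ((CStarRing.norm_coe_unitary_mul w p).trans_le hp)) hw).trans_eq (by ring)

theorem norm_mul_unitary_mul_le (w : unitary A) {p₀ p k q : A} {η δ : ℝ} (hp : ‖p‖ ≤ 1)
    (hk : ‖k‖ ≤ 1) (hq : ‖1 - q‖ ≤ 1) (hpp₀ : p * p₀ = p₀) (hwp : ‖(1 - q) * (w * p)‖ ≤ η)
    (hp₀k : ‖p₀ * k - k‖ ≤ δ) : ‖(1 - q) * (w * k)‖ ≤ η + 2 * δ := by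
  have hpk : ‖(p₀ * k - k) - p * (p₀ * k - k)‖ ≤ δ + 1 * δ :=
    norm_sub_le_of_le hp₀k (norm_mul_le_of_le hp hp₀k)
  have hsplit : (1 - q) * (w * k) =
      (1 - q) * (w * p) * k - (1 - q) * (w * ((p₀ * k - k) - p * (p₀ * k - k))) := by
    rw [mul_sub p, ← mul_assoc p, hpp₀]
    noncomm_ring
  rw [hsplit]
  refine (norm_sub_le_of_le (norm_mul_le_of_le hwp hk) (norm_mul_le_of_le hq
    ((CStarRing.norm_coe_unitary_mul w _).trans_le hpk))).trans_eq (by ring)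

variable [PartialOrder A] [StarOrderedRing A]

theorem exists_unitary_mul_abs_eq {y : A} (hy : IsUnit y) :
    ∃ u : unitary A, (u : A) * CFC.abs y = y := by
  have habs : IsUnit (CFC.abs y) := by
    have hsq : IsUnit (CFC.abs y * CFC.abs y) := by
      rw [CFC.abs_mul_abs]
      exact hy.star.mul hy
    exact ((Commute.refl _).isUnit_mul_iff.1 hsq).1
  have hunitary : hy.unit * habs.unit⁻¹ ∈ unitary Aˣ := by
    rw [Units.unitary_eq, Submonoid.mem_comap, Units.coeHom_apply, Units.val_mul,
      Units.mul_inv_mem_unitary]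
    refine Units.ext ?_
    simp [(CFC.abs_nonneg y).isSelfAdjoint.star_eq, CFC.abs_mul_abs]
  rw [Units.unitary_eq] at hunitary
  exact ⟨⟨_, hunitary⟩, by simp [mul_assoc]⟩

theorem norm_le_norm_one_add_mul {p : A} (hp : 0 ≤ p) (x : A) : ‖x‖ ≤ ‖(1 + p) * x‖ := by
  have hsa : star p = p := hp.isSelfAdjoint.star_eq
  have hsq : 0 ≤ p * p := by simpa [hsa] using star_mul_self_nonneg p
  have hle : star x * x ≤ star ((1 + p) * x) * ((1 + p) * x) := by
    calc star x * x = star x * 1 * x := by rw [mul_one]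
      _ ≤ star x * (1 + (p + p + p * p)) * x :=
        star_left_conjugate_le_conjugate
          (le_add_of_nonneg_right (add_nonneg (add_nonneg hp hp) hsq)) x
      _ = star ((1 + p) * x) * ((1 + p) * x) := by
        rw [star_mul, star_add, hsa, star_one]
        noncomm_ring
  have hnorm := CStarAlgebra.norm_le_norm_of_nonneg_of_le (star_mul_self_nonneg x) hle
  rw [CStarRing.norm_star_mul_self, CStarRing.norm_star_mul_self] at hnorm
  exact (mul_self_le_mul_self_iff (norm_nonneg _) (norm_nonneg _)).2 hnorm

-- `z` is replaced by the unitary polar part of a nearby invertible element.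
theorem exists_unitary_norm_mul_sub_mul_le (hsr : Dense {x : A | IsUnit x}) (z : A) {ε : ℝ}
    (hε : 0 < ε) :
    ∃ u : unitary A, ∀ m : A, ‖u * m - z * m‖ ≤ ‖star z * z * m - m‖ + ε * ‖m‖ := by
  have hopen : IsOpen {y : A | ‖star y * y - star z * z‖ + ‖y - z‖ < ε} :=
    isOpen_lt (by fun_prop) continuous_const
  obtain ⟨y, hyz : ‖star y * y - star z * z‖ + ‖y - z‖ < ε, hy : IsUnit y⟩ :=
    hsr.inter_open_nonempty _ hopen ⟨z, by simpa using hε⟩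
  obtain ⟨u, hu⟩ := exists_unitary_mul_abs_eq hy
  refine ⟨u, fun m ↦ ?_⟩
  have hpolar : (u : A) * m - z * m = u * (m - CFC.abs y * m) + (y - z) * m := by
    rw [mul_sub, ← mul_assoc _ (CFC.abs y), hu]
    noncomm_ring
  have habs : ‖m - CFC.abs y * m‖ ≤ ‖star y * y * m - m‖ := by
    have hfactor : m - star y * y * m = (1 + CFC.abs y) * (m - CFC.abs y * m) := by
      rw [← CFC.abs_mul_abs]
      noncomm_ring
    rw [norm_sub_rev _ m, hfactor]
    exact norm_le_norm_one_add_mul (CFC.abs_nonneg y) _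
  have hsq : star y * y * m - m = (star z * z * m - m) + (star y * y - star z * z) * m := by
    noncomm_ring
  calc ‖u * m - z * m‖ ≤ ‖m - CFC.abs y * m‖ + ‖(y - z) * m‖ := by
        rw [hpolar, ← CStarRing.norm_coe_unitary_mul u (m - CFC.abs y * m)]
        exact norm_add_le _ _
    _ ≤ (‖star z * z * m - m‖ + ‖star y * y - star z * z‖ * ‖m‖) + ‖y - z‖ * ‖m‖ := by
        refine add_le_add (habs.trans ?_) (norm_mul_le _ _)
        rw [hsq]
        exact norm_add_le_of_le le_rfl (norm_mul_le _ _)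
    _ = ‖star z * z * m - m‖ + (‖star y * y - star z * z‖ + ‖y - z‖) * ‖m‖ := by ring
    _ ≤ ‖star z * z * m - m‖ + ε * ‖m‖ := by gcongr

theorem exists_unitary_norm_mul_sub_le_of_cuntz (hsr : Dense {x : A | IsUnit x})
    {p c q z : A} {δ : ℝ} (hδ : 0 < δ) (hp : ‖p‖ ≤ 1) (hq : ‖1 - q‖ ≤ 1) (hcp : c * p = p)
    (hcz : ‖c - star z * z‖ ≤ δ) (hqz : q * z = z) :
    ∃ w : unitary A, ‖(1 - q) * (w * p)‖ ≤ 2 * δ := by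
  obtain ⟨w, hw⟩ := exists_unitary_norm_mul_sub_mul_le hsr z hδ
  have hzp : ‖star z * z * p - p‖ ≤ δ := by
    have hfactor : star z * z * p - p = -((c - star z * z) * p) := by
      rw [sub_mul, hcp]
      abel
    rw [hfactor, norm_neg]
    simpa using norm_mul_le_of_le hcz hp
  have hwp : ‖w * p - z * p‖ ≤ 2 * δ :=
    (hw p).trans (by nlinarith)
  have hqzp : (1 - q) * (w * p) = (1 - q) * (w * p - z * p) := by
    rw [mul_sub _ (w * p : A), ← mul_assoc _ z, sub_mul 1 q z, hqz, one_mul, sub_self, zero_mul,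
      sub_zero]
  refine ⟨w, ?_⟩
  rw [hqzp]
  simpa using norm_mul_le_of_le hq hwp

-- The element `w * k + (1 - q)` is almost isometric on both subspaces; replace it by a unitary.
theorem exists_unitary_approx_eq_and_approx_fix (hsr : Dense {x : A | IsUnit x}) (w : unitary A)
    {k q : A} {η δ : ℝ} (hδ : 0 < δ) (hk : IsSelfAdjoint k) (hq : IsSelfAdjoint q)
    (hqk : q * k = k) (hwk : ‖(1 - q) * (w * k)‖ ≤ η) :
    ∃ v : unitary A, (∀ e : A, ‖e‖ ≤ 1 → k * e = e → ‖v * e - w * e‖ ≤ 2 * η + δ) ∧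
      ∀ m : A, ‖m‖ ≤ 1 → q * m = 0 → ‖v * m - m‖ ≤ 2 * η + δ := by
  obtain ⟨v, hv⟩ := exists_unitary_norm_mul_sub_mul_le hsr (w * k + (1 - q)) hδ
  have hkq : k * q = k := by simpa [hk.star_eq, hq.star_eq] using congrArg star hqk
  have hcross : ‖k * star (w : A) * (1 - q) + (1 - q) * (w * k)‖ ≤ 2 * η := by
    have hadjoint : k * star (w : A) * (1 - q) = star ((1 - q) * (w * k)) := by
      simp [hk.star_eq, hq.star_eq]
    rw [two_mul, hadjoint]
    exact norm_add_le_of_le (by rwa [norm_star]) hwk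
  have hsq : star (w * k + (1 - q)) * (w * k + (1 - q)) = (k * k + (1 - q) * (1 - q)) +
      (k * star (w : A) * (1 - q) + (1 - q) * (w * k)) := by
    have hww : k * star (w : A) * (w * k) = k * k := by
      rw [mul_assoc, ← mul_assoc (star (w : A)), coe_star_mul_self, one_mul]
    simp only [star_add, star_mul, star_sub, star_one, hk.star_eq, hq.star_eq]
    rw [add_mul, mul_add, mul_add, hww]
    abel
  have hbound : ∀ m : A, ‖m‖ ≤ 1 → (k * k + (1 - q) * (1 - q)) * m = m →
      ‖v * m - (w * k + (1 - q)) * m‖ ≤ 2 * η + δ := by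
    intro m hm hfix
    have hvm := hv m
    rw [hsq, add_mul (k * k + _) _ m, hfix, add_sub_cancel_left] at hvm
    have hcm := norm_mul_le_of_le hcross hm
    nlinarith
  refine ⟨v, fun e he hke ↦ ?_, fun m hm hqm ↦ ?_⟩
  · have hqe : (1 - q) * e = 0 := by rw [← hke, ← mul_assoc, sub_mul, hqk, one_mul, sub_self,
      zero_mul]
    simpa [add_mul, mul_assoc, hke, hqe] using hbound e he (by simp [add_mul, mul_assoc, hke, hqe])
  · have hkm : k * m = 0 := by rw [← hkq, mul_assoc, hqm, mul_zero]
    have hqm' : (1 - q) * m = m := by rw [sub_mul, hqm, one_mul, sub_zero]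
    simpa [add_mul, mul_assoc, hkm, hqm'] using
      hbound m hm (by simp [add_mul, mul_assoc, hkm, hqm'])

theorem exists_unitary_norm_conj_mul_sub_le (hsr : Dense {x : A | IsUnit x})
    {p₀ p c k q q' z : A} {δ : ℝ} (hδ : 0 < δ) (hp : ‖p‖ ≤ 1) (hk : IsSelfAdjoint k)
    (hk₁ : ‖k‖ ≤ 1) (hq : IsSelfAdjoint q) (hq₁ : ‖1 - q‖ ≤ 1) (hq' : IsSelfAdjoint q')
    (hq'₁ : ‖1 - q'‖ ≤ 1) (hpp₀ : p * p₀ = p₀) (hcp : c * p = p) (hqk : q * k = k)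
    (hq'q : q' * q = q) (hcz : ‖c - star z * z‖ ≤ δ) (hqz : q * z = z)
    (hp₀k : ‖p₀ * k - k‖ ≤ δ) :
    ∃ s : unitary A, ‖conjStarAlgAut ℂ A s q' * p - p‖ ≤ 11 * δ ∧
      ∀ e : A, IsSelfAdjoint e → ‖e‖ ≤ 1 → k * e = e →
        ‖conjStarAlgAut ℂ A s e - e‖ ≤ 18 * δ := by
  obtain ⟨w, hwp⟩ := exists_unitary_norm_mul_sub_le_of_cuntz hsr hδ hp hq₁ hcp hcz hqz
  have hwk : ‖(1 - q) * (w * k)‖ ≤ 4 * δ :=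
    (norm_mul_unitary_mul_le w hp hk₁ hq₁ hpp₀ hwp hp₀k).trans_eq (by ring)
  obtain ⟨v, hve, hvm⟩ := exists_unitary_approx_eq_and_approx_fix hsr w hδ hk hq hqk hwk
  refine ⟨star w * v, ?_, fun e he he₁ hke ↦ ?_⟩
  · have hqq' : q * (1 - q') = 0 := by
      have h := congrArg star hq'q
      rw [star_mul, hq.star_eq, hq'.star_eq] at h
      rw [mul_sub, mul_one, h, sub_self]
    have hq'w : ‖(1 - q') * (w * p)‖ ≤ 2 * δ := by
      have hfactor : (1 - q') * (w * p) = (1 - q') * ((1 - q) * (w * p)) := by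
        rw [← mul_assoc _ (1 - q), mul_sub _ 1 q, mul_one, sub_mul 1 q' q, hq'q, one_mul,
          sub_self, sub_zero]
      rw [hfactor]
      simpa using norm_mul_le_of_le hq'₁ hwp
    exact (norm_conj_star_mul_mul_sub_le hq' hp (hvm _ hq'₁ hqq') hq'w).trans_eq (by ring)
  · exact (norm_conj_star_mul_sub_le he (hve e he₁ hke)).trans_eq (by ring)

end StableRankOne

theorem mul_eq_of_mul_pow_eq {R : Type*} [NormedRing R] [StarRing R] [CStarRing R] {e r : R}
    (hr : IsSelfAdjoint r) (n : ℕ) (h : e * r ^ (n + 1) = r ^ (n + 1)) : e * r = r := by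
  induction n with
  | zero => simpa using h
  | succ n ih =>
    refine ih (sub_eq_zero.1 (CStarRing.mul_star_self_eq_zero_iff _ |>.1 ?_))
    have hdefect : (e * r ^ (n + 1) - r ^ (n + 1)) * r = 0 := by
      rw [sub_mul, mul_assoc, ← pow_succ, h, sub_self]
    have hstar : star (e * r ^ (n + 1) - r ^ (n + 1)) = r * (r ^ n * star e - r ^ n) := by
      simp only [star_sub, star_mul, star_pow, hr.star_eq, mul_sub, ← mul_assoc, ← pow_succ']
    rw [hstar, ← mul_assoc, hdefect, zero_mul]

section CuntzSubequiv

open Unitary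

variable {A : Type*} [CStarAlgebra A]

/-- Cuntz subequivalence `a ≾ b` of elements of a C*-algebra, with the approximating sequence
replaced by one approximant for each tolerance. -/
def CuntzSubequiv (a b : A) : Prop :=
  ∀ ε : ℝ, 0 < ε → ∃ x : A, ‖a - x * b * star x‖ ≤ ε

theorem CuntzSubequiv.conj {a b : A} (h : CuntzSubequiv a b) (u v : unitary A) :
    CuntzSubequiv (conjStarAlgAut ℂ A u a) (conjStarAlgAut ℂ A v b) := by
  intro ε hε
  obtain ⟨x, hx⟩ := h ε hε
  refine ⟨u * x * star (v : A), ?_⟩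
  have hconj : conjStarAlgAut ℂ A u a - u * x * star (v : A) * conjStarAlgAut ℂ A v b *
      star (u * x * star (v : A)) = conjStarAlgAut ℂ A u (a - x * b * star x) := by
    simp [mul_sub, sub_mul, mul_assoc, star_unitary_mul_cancel_left]
  rwa [hconj, StarAlgEquiv.norm_map]

variable [PartialOrder A] [StarOrderedRing A]

theorem CuntzSubequiv.exists_norm_sub_star_mul_self_le {a b e : A} (h : CuntzSubequiv a b)
    (hb : 0 ≤ b) (he : e * b = b) {ε : ℝ} (hε : 0 < ε) :
    ∃ z : A, ‖a - star z * z‖ ≤ ε ∧ e * z = z := by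
  obtain ⟨x, hx⟩ := h ε hε
  have hsqrt : CFC.sqrt b * CFC.sqrt b = b := CFC.sqrt_mul_sqrt_self b
  have hsa : IsSelfAdjoint (CFC.sqrt b) := (CFC.sqrt_nonneg b).isSelfAdjoint
  have he_sqrt : e * CFC.sqrt b = CFC.sqrt b :=
    mul_eq_of_mul_pow_eq hsa 1 (by rw [one_add_one_eq_two, pow_two, hsqrt, he])
  refine ⟨CFC.sqrt b * star x, ?_, by rw [← mul_assoc, he_sqrt]⟩
  rwa [star_mul, star_star, hsa.star_eq, mul_assoc, ← mul_assoc (CFC.sqrt b), hsqrt, ← mul_assoc]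

end CuntzSubequiv

theorem sum_range_le_sum_range_add_nsmul {M : Type*} [AddCommMonoid M] [PartialOrder M]
    [IsOrderedAddMonoid M] {f g : ℕ → M} {u c : M} {N : ℕ} (s : ℕ) (hg : ∀ i, 0 ≤ g i)
    (hg' : ∀ i, g i ≤ u) (hfg : ∀ i < N, f i ≤ g (s + i) + c) :
    ∑ i ∈ Finset.range N, f i ≤ ∑ i ∈ Finset.range N, g i + s • u + N • c := by
  calc ∑ i ∈ Finset.range N, f i ≤ ∑ i ∈ Finset.range N, (g (s + i) + c) :=
        Finset.sum_le_sum fun i hi ↦ hfg i (Finset.mem_range.1 hi)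
    _ = ∑ i ∈ Finset.range N, g (s + i) + N • c := by simp [Finset.sum_add_distrib]
    _ ≤ ∑ i ∈ Finset.range (s + N), g i + N • c := by
        gcongr
        rw [Finset.sum_range_add]
        exact le_add_of_nonneg_left (Finset.sum_nonneg fun i _ ↦ hg i)
    _ ≤ ∑ i ∈ Finset.range N, g i + s • u + N • c := by
        gcongr
        rw [add_comm s N, Finset.sum_range_add]
        gcongr
        simpa using Finset.sum_le_card_nsmul (Finset.range s) _ u fun i _ ↦ hg' (N + i)

section Order

variable {A : Type*} [CStarAlgebra A] [PartialOrder A] [StarOrderedRing A]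

theorem le_add_algebraMap_of_norm_mul_sub_le {p q : A} {δ : ℝ} (hp : 0 ≤ p) (hp₁ : p ≤ 1)
    (hq : 0 ≤ q) (hq₁ : q ≤ 1) (h : ‖q * p - p‖ ≤ δ) : p ≤ q + algebraMap ℝ A (2 * δ) := by
  have hp_star : star p = p := hp.isSelfAdjoint.star_eq
  have hq_star : star q = q := hq.isSelfAdjoint.star_eq
  have hq_norm : ‖q‖ ≤ 1 := (CStarAlgebra.norm_le_one_iff_of_nonneg q).2 hq₁
  have h_star : ‖p * q - p‖ ≤ δ := by
    have hadjoint : p * q - p = star (q * p - p) := by simp [hp_star, hq_star]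
    rwa [hadjoint, norm_star]
  have hcompress : ‖p - q * p * q‖ ≤ 2 * δ := by
    have hsplit : p - q * p * q = -(q * p - p) - q * (p * q - p) := by noncomm_ring
    rw [hsplit]
    exact (norm_sub_le_of_le ((norm_neg _).trans_le h)
      (norm_mul_le_of_le hq_norm h_star)).trans_eq (by ring)
  have hsa : IsSelfAdjoint (p - q * p * q) := by
    simp [isSelfAdjoint_iff, hp_star, hq_star, mul_assoc]
  calc p = (p - q * p * q) + q * p * q := by abel
    _ ≤ algebraMap ℝ A (2 * δ) + q * 1 * q :=
      add_le_add (hsa.le_algebraMap_norm_self.trans (algebraMap_mono A hcompress))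
        (conjugate_le_conjugate_of_nonneg hp₁ hq)
    _ = q ^ 2 + algebraMap ℝ A (2 * δ) := by rw [mul_one, pow_two, add_comm]
    _ ≤ q + algebraMap ℝ A (2 * δ) := by
      gcongr
      simpa using CStarAlgebra.pow_antitone hq hq₁ one_le_two

theorem le_of_mul_eq {p q : A} (hp : 0 ≤ p) (hp₁ : p ≤ 1) (hq : 0 ≤ q) (hq₁ : q ≤ 1)
    (h : q * p = p) : p ≤ q := by
  simpa using le_add_algebraMap_of_norm_mul_sub_le (δ := 0) hp hp₁ hq hq₁ (by simp [h])

theorem norm_le_of_le_algebraMap {x : A} {ε : ℝ} (hε : 0 ≤ ε) (hx : IsSelfAdjoint x)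
    (h : x ≤ algebraMap ℝ A ε) (h' : -x ≤ algebraMap ℝ A ε) : ‖x‖ ≤ ε := by
  have hlower : algebraMap ℝ A (-ε) ≤ x := by
    rw [map_neg]
    exact neg_le.1 h'
  rw [← cfc_id ℝ x hx]
  exact norm_cfc_le hε fun t ht ↦ abs_le.2
    ⟨(algebraMap_le_iff_le_spectrum hx).1 hlower t ht, (le_algebraMap_iff_spectrum_le hx).1 h t ht⟩

end Order

theorem zmod_two_eq_or_eq_add_one (x y : ZMod 2) : x = y ∨ x = y + 1 := by
  decide +revert

theorem norm_mul_sub_le_of_norm_sub_le {R : Type*} [SeminormedRing R] {a b a' b' : R}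
    {α δ : ℝ} (ha : ‖a‖ ≤ 1) (hb' : ‖b'‖ ≤ 1) (haa' : ‖a' - a‖ ≤ α)
    (hbb' : ‖b' - b‖ ≤ α) (hab : ‖a * b - b‖ ≤ δ) :
    ‖a' * b' - b'‖ ≤ 3 * α + δ := by
  have hsplit : a' * b' - b' = (a' - a) * b' + a * (b' - b) + (a * b - b) - (b' - b) := by
    noncomm_ring
  rw [hsplit]
  exact (norm_sub_le_of_le (norm_add_le_of_le (norm_add_le_of_le (norm_mul_le_of_le haa' hb')
    (norm_mul_le_of_le ha hbb')) hab) hbb').trans_eq (by ring)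

section Ladder

open Unitary

variable {A : Type*} [CStarAlgebra A]

/-- Two increasing families of positive contractions, indexed by `ℤ / 2`, in which every member
acts as a unit on the earlier members of its own family and is Cuntz below the member of the
other family two rungs higher. -/
structure IsLadder [PartialOrder A] (X : ZMod 2 → ℕ → A) : Prop where
  nonneg : ∀ x i, 0 ≤ X x i
  le_one : ∀ x i, X x i ≤ 1
  mul_of_lt : ∀ x {i j : ℕ}, i < j → X x j * X x i = X x i
  cuntzSubequiv : ∀ x i, CuntzSubequiv (X x i) (X (x + 1) (i + 2))

/-- The conjugate of a pair of families by a pair of unitaries. -/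
def conjFamily (U : ZMod 2 → unitary A) (X : ZMod 2 → ℕ → A) (x : ZMod 2) (i : ℕ) : A :=
  conjStarAlgAut ℂ A (U x) (X x i)

theorem conjFamily_mul (V U : ZMod 2 → unitary A) (X : ZMod 2 → ℕ → A) :
    conjFamily (V * U) X = conjFamily V (conjFamily U X) := by
  ext x i
  exact conjStarAlgAut_mul_apply (V x) (U x) (X x i)

/-- The first `m` links of the zigzag through the two families that uses every sixth rung:
a rung of one family is approximately a unit for the preceding rung of the other. The last link
is required for one rung more, which is the room needed to attach the next link. -/
structure IsZigzag (Y : ZMod 2 → ℕ → A) (m : ℕ) (δ : ℝ) : Prop where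
  norm_le : ∀ j : ℕ, j < m → ‖Y (j + 1) (6 * (j + 1)) * Y j (6 * j) - Y j (6 * j)‖ ≤ δ
  norm_le_last : ∀ j : ℕ, j + 1 = m →
    ‖Y (j + 1) (6 * (j + 1)) * Y j (6 * j + 1) - Y j (6 * j + 1)‖ ≤ δ

variable [PartialOrder A] [StarOrderedRing A] {X Y : ZMod 2 → ℕ → A}

namespace IsLadder

theorem isSelfAdjoint (hX : IsLadder X) (x : ZMod 2) (i : ℕ) : IsSelfAdjoint (X x i) :=
  (hX.nonneg x i).isSelfAdjoint

theorem norm_le_one (hX : IsLadder X) (x : ZMod 2) (i : ℕ) : ‖X x i‖ ≤ 1 :=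
  (CStarAlgebra.norm_le_one_iff_of_nonneg _ (hX.nonneg x i)).2 (hX.le_one x i)

theorem norm_one_sub_le_one (hX : IsLadder X) (x : ZMod 2) (i : ℕ) : ‖1 - X x i‖ ≤ 1 :=
  (CStarAlgebra.norm_le_one_iff_of_nonneg _ (sub_nonneg.2 (hX.le_one x i))).2
    (sub_le_self _ (hX.nonneg x i))

theorem monotone (hX : IsLadder X) (x : ZMod 2) : Monotone (X x) := by
  refine monotone_nat_of_le_succ fun i ↦ ?_
  exact le_of_mul_eq (hX.nonneg x i) (hX.le_one x i) (hX.nonneg x _) (hX.le_one x _)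
    (hX.mul_of_lt x i.lt_succ_self)

protected theorem conjFamily (hX : IsLadder X) (U : ZMod 2 → unitary A) :
    IsLadder (conjFamily U X) where
  nonneg x i := map_nonneg (conjStarAlgAut ℂ A (U x)) (hX.nonneg x i)
  le_one x i := by
    simpa [conjFamily] using (map_le_map_iff (conjStarAlgAut ℂ A (U x))).2 (hX.le_one x i)
  mul_of_lt x _ _ hij := by
    rw [conjFamily, conjFamily, ← map_mul, hX.mul_of_lt x hij]
  cuntzSubequiv x i := (hX.cuntzSubequiv x i).conj (U x) (U (x + 1))

end IsLadder

/-- The rungs already linked on the side about to be rotated have a common unit `k` which the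
last rung `Y m (6 * m)` of the other side approximately absorbs. -/
theorem IsZigzag.exists_unit {m : ℕ} {δ : ℝ} (hY : IsLadder Y) (hzigzag : IsZigzag Y m δ)
    (hδ : 0 ≤ δ) :
    ∃ k : A, IsSelfAdjoint k ∧ ‖k‖ ≤ 1 ∧ Y (m + 1) (6 * m + 5) * k = k ∧
      ‖Y m (6 * m) * k - k‖ ≤ δ ∧ ∀ j < m, k * Y (m + 1) (6 * j) = Y (m + 1) (6 * j) := by
  cases m with
  | zero => exact ⟨0, by simp, by simp, by simp, by simpa using hδ, by simp⟩
  | succ n =>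
    have hparity : ((n + 1 : ℕ) : ZMod 2) + 1 = n := by
      rw [Nat.cast_succ, add_assoc, CharTwo.add_self_eq_zero, add_zero]
    rw [hparity]
    refine ⟨Y n (6 * n + 1), hY.isSelfAdjoint _ _, hY.norm_le_one _ _,
      hY.mul_of_lt _ (by lia), ?_, fun j hj ↦ hY.mul_of_lt _ (by lia)⟩
    rw [Nat.cast_succ]
    exact hzigzag.norm_le_last n rfl

theorem IsLadder.exists_unitary_rotation (hsr : Dense {x : A | IsUnit x}) (hY : IsLadder Y)
    {m : ℕ} {δ : ℝ} (hδ : 0 < δ) (hzigzag : IsZigzag Y m δ) :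
    ∃ s : unitary A, ‖conjStarAlgAut ℂ A s (Y (m + 1) (6 * (m + 1))) * Y m (6 * m + 1) -
        Y m (6 * m + 1)‖ ≤ 11 * δ ∧
      ∀ j < m, ‖conjStarAlgAut ℂ A s (Y (m + 1) (6 * j)) - Y (m + 1) (6 * j)‖ ≤ 18 * δ := by
  obtain ⟨k, hk, hk₁, hqk, hp₀k, hke⟩ := hzigzag.exists_unit hY hδ.le
  obtain ⟨z, hcz, hqz⟩ := (hY.cuntzSubequiv m (6 * m + 2)).exists_norm_sub_star_mul_self_le
    (hY.nonneg _ _) (hY.mul_of_lt (m + 1) (show 6 * m + 2 + 2 < 6 * m + 5 by lia)) hδ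
  obtain ⟨s, hs, hfix⟩ := exists_unitary_norm_conj_mul_sub_le hsr hδ (hY.norm_le_one m (6 * m + 1))
    hk hk₁ (hY.isSelfAdjoint _ _) (hY.norm_one_sub_le_one _ _)
    (hY.isSelfAdjoint (m + 1) (6 * (m + 1))) (hY.norm_one_sub_le_one _ _)
    (hY.mul_of_lt m (by lia)) (hY.mul_of_lt m (by lia)) hqk (hY.mul_of_lt _ (by lia)) hcz hqz hp₀k
  exact ⟨s, hs, fun j hj ↦ hfix _ (hY.isSelfAdjoint _ _) (hY.norm_le_one _ _) (hke j hj)⟩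

theorem IsLadder.exists_isZigzag_succ (hsr : Dense {x : A | IsUnit x}) (hY : IsLadder Y)
    {m : ℕ} {δ : ℝ} (hδ : 0 < δ) (hzigzag : IsZigzag Y m δ) :
    ∃ V : ZMod 2 → unitary A, IsZigzag (conjFamily V Y) (m + 1) (55 * δ) := by
  obtain ⟨s, hs, hfix⟩ := hY.exists_unitary_rotation hsr hδ hzigzag
  let V : ZMod 2 → unitary A := Pi.mulSingle (m + 1) s
  have hrotated (i : ℕ) : conjFamily V Y (m + 1) i = conjStarAlgAut ℂ A s (Y (m + 1) i) := by
    simp [conjFamily, V]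
  have hunmoved (i : ℕ) : conjFamily V Y m i = Y m i := by
    simp [conjFamily, V]
  have hlast : ‖conjFamily V Y (m + 1) (6 * (m + 1)) * conjFamily V Y m (6 * m + 1) -
      conjFamily V Y m (6 * m + 1)‖ ≤ 55 * δ := by
    rw [hrotated, hunmoved]
    linarith
  have hclose (j : ℕ) (hj : j ≤ m) : ‖conjFamily V Y j (6 * j) - Y j (6 * j)‖ ≤ 18 * δ := by
    rcases zmod_two_eq_or_eq_add_one (j : ZMod 2) m with hparity | hparity
    · rw [hparity, hunmoved, sub_self, norm_zero]
      positivity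
    · have hjm : j < m := hj.lt_of_ne fun h ↦ by simp [h] at hparity
      rw [hparity, hrotated]
      exact hfix j hjm
  refine ⟨V, fun j hj ↦ ?_, fun j hj ↦ ?_⟩
  · rcases (Nat.lt_succ_iff.1 hj).lt_or_eq with hjm | rfl
    · have hnext := hclose (j + 1) hjm
      push_cast at hnext
      exact (norm_mul_sub_le_of_norm_sub_le (hY.norm_le_one _ _)
        ((hY.conjFamily V).norm_le_one _ _) hnext (hclose j hjm.le)
        (hzigzag.norm_le j hjm)).trans_eq (by ring)
    · have hlower := norm_mul_le_of_le hlast ((hY.conjFamily V).norm_le_one j (6 * j))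
      rwa [sub_mul, mul_assoc, (hY.conjFamily V).mul_of_lt _ (Nat.lt_succ_self _), mul_one]
        at hlower
  · obtain rfl : j = m := Nat.succ_injective hj
    exact hlast

theorem IsLadder.exists_isZigzag (hsr : Dense {x : A | IsUnit x}) (hX : IsLadder X) (m : ℕ)
    {δ : ℝ} (hδ : 0 < δ) : ∃ U : ZMod 2 → unitary A, IsZigzag (conjFamily U X) m δ := by
  induction m generalizing δ with
  | zero => exact ⟨1, by simp, by simp⟩
  | succ m ih =>
    obtain ⟨U, hU⟩ := ih (show 0 < δ / 55 by positivity)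
    obtain ⟨V, hV⟩ := (hX.conjFamily U).exists_isZigzag_succ hsr (by positivity) hU
    refine ⟨V * U, ?_⟩
    rw [conjFamily_mul]
    convert hV using 1
    ring

theorem IsZigzag.le_add_algebraMap {N m : ℕ} {δ : ℝ} (hY : IsLadder Y) (hzigzag : IsZigzag Y m δ)
    (hm : N + 4 ≤ m) (x : ZMod 2) {i : ℕ} (hi : i < N) :
    Y x i ≤ Y (x + 1) (24 + i) + algebraMap ℝ A (2 * δ) := by
  -- `j` has the parity of `x` and satisfies `i ≤ 6 * j` and `6 * (j + 1) ≤ 24 + i`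
  let j : ℕ := 2 * (i / 12 + 1) + x.val
  have hval : x.val < 2 := x.val_lt
  have hjx : (j : ZMod 2) = x := by
    simp [j, CharTwo.two_eq_zero]
  have hlink := hzigzag.norm_le j (by lia)
  rw [hjx] at hlink
  calc Y x i ≤ Y x (6 * j) := hY.monotone x (by lia)
    _ ≤ Y (x + 1) (6 * (j + 1)) + algebraMap ℝ A (2 * δ) :=
      le_add_algebraMap_of_norm_mul_sub_le (hY.nonneg _ _) (hY.le_one _ _) (hY.nonneg _ _)
        (hY.le_one _ _) hlink
    _ ≤ Y (x + 1) (24 + i) + algebraMap ℝ A (2 * δ) := by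
      gcongr
      exact hY.monotone _ (by lia)

theorem IsZigzag.le_add_algebraMap_of_sum {N m : ℕ} {δ : ℝ} {b : ZMod 2 → A} (hN : 0 < N)
    (hY : IsLadder Y) (hzigzag : IsZigzag Y m δ) (hm : N + 4 ≤ m)
    (hsum : ∀ x, N • b x = ∑ i ∈ Finset.range N, Y x i) (x : ZMod 2) :
    b x ≤ b (x + 1) + algebraMap ℝ A (24 / N + 2 * δ) := by
  have hN' : (0 : ℝ) < N := Nat.cast_pos.2 hN
  refine (smul_le_smul_iff_of_pos_left hN').1 ?_
  calc (N : ℝ) • b x ≤ (N : ℝ) • b (x + 1) + 24 • (1 : A) + N • algebraMap ℝ A (2 * δ) := by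
        rw [Nat.cast_smul_eq_nsmul, Nat.cast_smul_eq_nsmul, hsum, hsum]
        exact sum_range_le_sum_range_add_nsmul 24 (hY.nonneg _) (hY.le_one _)
          fun i hi ↦ hzigzag.le_add_algebraMap hY hm x hi
    _ = (N : ℝ) • (b (x + 1) + algebraMap ℝ A (24 / N + 2 * δ)) := by
        have hscale : (24 : ℕ) • (1 : A) + N • algebraMap ℝ A (2 * δ) =
            (N : ℝ) • algebraMap ℝ A (24 / N + 2 * δ) := by
          rw [← map_one (algebraMap ℝ A), ← map_nsmul, ← map_nsmul, ← map_add,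
            ← map_real_smul (algebraMap ℝ A) (by fun_prop)]
          congr 1
          simp only [nsmul_eq_mul, smul_eq_mul]
          field_simp
          push_cast
          ring
        rw [smul_add, ← hscale, add_assoc]

theorem norm_conj_sub_le_of_le_algebraMap {u v : unitary A} {a b : A} {ε : ℝ} (hε : 0 ≤ ε)
    (ha : IsSelfAdjoint a) (hb : IsSelfAdjoint b)
    (hle : conjStarAlgAut ℂ A u a ≤ conjStarAlgAut ℂ A v b + algebraMap ℝ A ε)
    (hge : conjStarAlgAut ℂ A v b ≤ conjStarAlgAut ℂ A u a + algebraMap ℝ A ε) :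
    ‖conjStarAlgAut ℂ A (star v * u) a - b‖ ≤ ε := by
  have hconj : conjStarAlgAut ℂ A (star v * u) a - b =
      conjStarAlgAut ℂ A (star v) (conjStarAlgAut ℂ A u a - conjStarAlgAut ℂ A v b) := by
    rw [map_sub, ← conjStarAlgAut_mul_apply, ← conjStarAlgAut_mul_apply, star_mul_self, map_one,
      StarAlgEquiv.one_apply]
  rw [hconj, StarAlgEquiv.norm_map]
  refine norm_le_of_le_algebraMap hε ((ha.map _).sub (hb.map _)) (sub_le_iff_le_add'.2 hle) ?_
  rw [neg_sub]
  exact sub_le_iff_le_add'.2 hge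

theorem IsLadder.exists_unitary_norm_conj_sub_le (hsr : Dense {x : A | IsUnit x})
    (hX : IsLadder X) {a : ZMod 2 → A} (ha : ∀ x, IsSelfAdjoint (a x)) {N : ℕ} (hN : 0 < N)
    (hsum : ∀ x, N • a x = ∑ i ∈ Finset.range N, X x i) {δ : ℝ} (hδ : 0 < δ) :
    ∃ u : unitary A, ‖conjStarAlgAut ℂ A u (a 0) - a 1‖ ≤ 24 / N + 2 * δ := by
  obtain ⟨U, hU⟩ := hX.exists_isZigzag hsr (N + 4) hδ
  have hsum' (x : ZMod 2) : N • conjStarAlgAut ℂ A (U x) (a x) =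
      ∑ i ∈ Finset.range N, conjFamily U X x i := by
    rw [← map_nsmul, hsum, map_sum]
    rfl
  have hle := hU.le_add_algebraMap_of_sum hN (hX.conjFamily U) le_rfl hsum'
  exact ⟨star (U 1) * U 0, norm_conj_sub_le_of_le_algebraMap (by positivity) (ha 0) (ha 1)
    (hle 0) (hle 1)⟩

end Ladder

section Ramp

/-- The piecewise linear function rising from `0` to `1` on the `i`-th of the `N` subintervals of
`[0, 1]` of length `1 / N`, numbered from right to left starting at `i = 0`. -/
def ramp (N i : ℕ) (t : ℝ) : ℝ := max 0 (min 1 (N * t - N + 1 + i))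

theorem continuous_ramp (N i : ℕ) : Continuous (ramp N i) := by
  unfold ramp
  fun_prop

theorem ramp_nonneg (N i : ℕ) (t : ℝ) : 0 ≤ ramp N i t := le_max_left _ _

theorem ramp_le_one (N i : ℕ) (t : ℝ) : ramp N i t ≤ 1 := max_le zero_le_one (min_le_left _ _)

theorem ramp_mono (N : ℕ) (t : ℝ) : Monotone fun i ↦ ramp N i t := by
  intro i j hij
  simp only [ramp]
  gcongr

theorem ramp_eq_one {N i : ℕ} {t : ℝ} (h : (N : ℝ) ≤ N * t + i) : ramp N i t = 1 := by
  rw [ramp, min_eq_left (by linarith), max_eq_right zero_le_one]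

theorem ramp_eq_zero {N i : ℕ} {t : ℝ} (h : N * t + i + 1 ≤ N) : ramp N i t = 0 :=
  max_eq_left ((min_le_right _ _).trans (by linarith))

theorem ramp_mul_ramp_of_lt (N : ℕ) {i j : ℕ} (hij : i < j) (t : ℝ) :
    ramp N j t * ramp N i t = ramp N i t := by
  have hij' : (i : ℝ) + 1 ≤ j := mod_cast hij
  rcases le_total (N * t + i + 1 : ℝ) N with h | h
  · rw [ramp_eq_zero h, mul_zero]
  · rw [ramp_eq_one (by linarith : (N : ℝ) ≤ N * t + j), one_mul]

theorem sum_ramp (N : ℕ) {t : ℝ} (ht : t ∈ Set.Icc (0 : ℝ) 1) :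
    ∑ i ∈ Finset.range N, ramp N i t = N * t := by
  have hpartial (n : ℕ) : ∑ i ∈ Finset.range n, ramp N i t = max 0 (N * t - N + n) := by
    induction n with
    | zero => simp [mul_le_of_le_one_right (Nat.cast_nonneg N) ht.2]
    | succ n ih =>
      rw [Finset.sum_range_succ, ih]
      push_cast
      rcases le_total (N * t - N + n : ℝ) 0 with h | h
      · rw [max_eq_left h, ramp, min_eq_right (by linarith)]
        ring_nf
      · rw [max_eq_right h, ramp_eq_one (by linarith), max_eq_right (by linarith)]
        ring
  rw [hpartial, sub_add_cancel, max_eq_right (mul_nonneg (Nat.cast_nonneg N) ht.1)]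

variable {A : Type*} [CStarAlgebra A]

theorem cfc_ramp_mul_cfc_ramp_of_lt (N : ℕ) {i j : ℕ} (hij : i < j) (a : A) :
    cfc (ramp N j) a * cfc (ramp N i) a = cfc (ramp N i) a := by
  rw [← cfc_mul _ _ _ (continuous_ramp N j).continuousOn (continuous_ramp N i).continuousOn]
  exact cfc_congr fun t _ ↦ ramp_mul_ramp_of_lt N hij t

variable [PartialOrder A] [StarOrderedRing A]

theorem spectrum_subset_Icc_of_nonneg_of_norm_le_one {a : A} (ha : 0 ≤ a) (ha₁ : ‖a‖ ≤ 1) :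
    spectrum ℝ a ⊆ Set.Icc 0 1 := by
  have hle : a ≤ algebraMap ℝ A 1 := by
    simpa using (CStarAlgebra.norm_le_one_iff_of_nonneg a).1 ha₁
  exact fun t ht ↦ ⟨spectrum_nonneg_of_nonneg ha ht,
    (le_algebraMap_iff_spectrum_le ha.isSelfAdjoint).1 hle t ht⟩

theorem sum_cfc_ramp (N : ℕ) {a : A} (ha : 0 ≤ a) (ha₁ : ‖a‖ ≤ 1) :
    N • a = ∑ i ∈ Finset.range N, cfc (ramp N i) a := by
  rw [← cfc_sum _ _ _ fun i _ ↦ (continuous_ramp N i).continuousOn, ← Nat.cast_smul_eq_nsmul ℝ,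
    ← cfc_const_mul_id (N : ℝ) a]
  refine cfc_congr fun t ht ↦ ?_
  rw [Finset.sum_apply, sum_ramp N (spectrum_subset_Icc_of_nonneg_of_norm_le_one ha ha₁ ht)]

theorem cfc_ramp_eq_one {N i : ℕ} (hi : N ≤ i) {a : A} (ha : 0 ≤ a) : cfc (ramp N i) a = 1 := by
  rw [← cfc_one ℝ a]
  refine cfc_congr fun t ht ↦ ramp_eq_one ?_
  have ht₀ : 0 ≤ t := spectrum_nonneg_of_nonneg ha ht
  have hi' : (N : ℝ) ≤ i := mod_cast hi
  nlinarith [mul_nonneg (Nat.cast_nonneg (α := ℝ) N) ht₀]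

theorem cuntzSubequiv_one {a : A} (ha : 0 ≤ a) : CuntzSubequiv a 1 := by
  refine fun ε hε ↦ ⟨CFC.sqrt a, ?_⟩
  rw [mul_one, (CFC.sqrt_nonneg a).isSelfAdjoint.star_eq, CFC.sqrt_mul_sqrt_self a, sub_self,
    norm_zero]
  exact hε.le

theorem isLadder_cfc_ramp {N : ℕ} {a : ZMod 2 → A} (ha : ∀ x, 0 ≤ a x)
    (hcuntz : ∀ x i, i + 2 < N →
      CuntzSubequiv (cfc (ramp N i) (a x)) (cfc (ramp N (i + 2)) (a (x + 1)))) :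
    IsLadder fun x i ↦ cfc (ramp N i) (a x) where
  nonneg x i := cfc_nonneg fun t _ ↦ ramp_nonneg N i t
  le_one x i := cfc_le_one _ _ fun t _ ↦ ramp_le_one N i t
  mul_of_lt x _ _ hij := cfc_ramp_mul_cfc_ramp_of_lt N hij (a x)
  cuntzSubequiv x i := by
    rcases lt_or_ge (i + 2) N with hi | hi
    · exact hcuntz x i hi
    · rw [cfc_ramp_eq_one hi (ha (x + 1))]
      exact cuntzSubequiv_one (cfc_nonneg fun t _ ↦ ramp_nonneg N i t)

end Ramp

section StrictComparison

theorem cstarNorm_eq_norm_map {A B : Type} [CStarAlgebra A] [Ring B] [StarRing B] [Algebra ℂ B]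
    (φ : B ≃⋆ₐ[ℂ] A) (b : B) : cstarNorm b = ‖φ b‖ := by
  have hradius : spectralRadius ℂ (star b * b) = spectralRadius ℂ (star (φ b) * φ b) := by
    rw [← map_star, ← map_mul, spectralRadius, spectralRadius, AlgEquiv.spectrum_eq φ]
  rw [cstarNorm, hradius, (IsSelfAdjoint.star_mul_self _).spectralRadius_eq_nnnorm]
  simp [CStarRing.norm_star_mul_self]

theorem CuntzBelowIn.cuntzSubequiv_map {A B : Type} [CStarAlgebra A] [Ring B] [StarRing B]
    [Algebra ℂ B] (φ : B ≃⋆ₐ[ℂ] A) {a b : B} (h : CuntzBelowIn a b) :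
    CuntzSubequiv (φ a) (φ b) := by
  intro ε hε
  obtain ⟨x, hx⟩ := h
  obtain ⟨n, hn : cstarNorm _ < ε⟩ := (hx.eventually (Iio_mem_nhds hε)).exists
  refine ⟨φ (x n), ?_⟩
  rw [cstarNorm_eq_norm_map φ, map_sub, map_mul, map_mul, map_star] at hn
  exact hn.le

variable {A : Type} [CStarAlgebra A]

/-- The identification of `1 × 1` matrices over `A` with `A`. -/
def matrixOneEquiv : Matrix (Fin 1) (Fin 1) A ≃⋆ₐ[ℂ] A where
  __ := Matrix.uniqueEquiv
  map_mul' M M' := by simp [Matrix.mul_apply]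
  map_add' _ _ := rfl
  map_star' _ := rfl
  map_smul' _ _ := rfl

theorem matrixOneEquiv_apply (M : Matrix (Fin 1) (Fin 1) A) : matrixOneEquiv M = M 0 0 := rfl

/-- Strict comparison of positive `k × k` matrices over `A` with respect to bounded traces, for
one fixed size `k`. -/
def StrictComparisonAt (A : Type) [CStarAlgebra A] (k : ℕ) : Prop :=
  ∀ a b : Matrix (Fin k) (Fin k) A,
    (∃ y : Matrix (Fin k) (Fin k) A, a = star y * y) →
    (∃ y : Matrix (Fin k) (Fin k) A, b = star y * y) →
    (∀ τ : A →L[ℂ] ℂ, IsTracialState τ → ∀ La Lb : ℝ,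
      IsDLimit τ a La → IsDLimit τ b Lb → La < Lb) →
    CuntzBelowIn a b

variable [PartialOrder A] [StarOrderedRing A]

theorem IsTracialState.re_mono {τ : A →L[ℂ] ℂ} (hτ : IsTracialState τ) {a b : A} (h : a ≤ b) :
    (τ a).re ≤ (τ b).re := by
  have hnonneg : 0 ≤ τ (b - a) :=
    hτ.2.1 _ (CStarAlgebra.nonneg_iff_eq_star_mul_self.1 (sub_nonneg.2 h))
  rw [map_sub, sub_nonneg] at hnonneg
  exact (Complex.le_def.1 hnonneg).1

theorem IsDLimit.exists_roots {τ : A →L[ℂ] ℂ} {a : A} {L : ℝ}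
    (h : IsDLimit τ (matrixOneEquiv.symm a) L) :
    ∃ r : ℕ → A, (∀ n, 0 ≤ r n) ∧ (∀ n, r n ^ (n + 1) = a) ∧
      Filter.Tendsto (fun n ↦ (τ (r n)).re) Filter.atTop (nhds L) := by
  obtain ⟨r, hr, hL⟩ := h
  refine ⟨fun n ↦ matrixOneEquiv (r n), fun n ↦ ?_, fun n ↦ ?_, ?_⟩
  · obtain ⟨y, hy⟩ := (hr n).1
    simp only [hy, map_mul, map_star]
    exact star_mul_self_nonneg _
  · rw [← map_pow, (hr n).2, StarAlgEquiv.apply_symm_apply]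
  · simpa [Function.comp_def, matrixOneEquiv_apply] using
      (Complex.continuous_re.tendsto _).comp hL

theorem le_one_of_pow_le_one {r : A} {n : ℕ} (hr : 0 ≤ r) (h : r ^ (n + 1) ≤ 1) : r ≤ 1 := by
  rw [← map_one (algebraMap ℝ A)] at h ⊢
  refine (le_algebraMap_iff_spectrum_le hr.isSelfAdjoint).2 fun t ht ↦ ?_
  have ht₀ : 0 ≤ t := spectrum_nonneg_of_nonneg hr ht
  refine (pow_le_one_iff_of_nonneg ht₀ n.succ_ne_zero).1 ?_
  exact (le_algebraMap_iff_spectrum_le (hr.isSelfAdjoint.pow _)).1 h _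
    (spectrum.pow_mem_pow r (n + 1) ht)

theorem IsDLimit.le_re_of_mul_eq {τ : A →L[ℂ] ℂ} (hτ : IsTracialState τ) {a e : A} {L : ℝ}
    (ha₁ : a ≤ 1) (he : 0 ≤ e) (he₁ : e ≤ 1) (hea : e * a = a)
    (h : IsDLimit τ (matrixOneEquiv.symm a) L) : L ≤ (τ e).re := by
  obtain ⟨r, hr, hroot, hL⟩ := h.exists_roots
  refine le_of_tendsto' hL fun n ↦ hτ.re_mono ?_
  have her : e * r n = r n :=
    mul_eq_of_mul_pow_eq (hr n).isSelfAdjoint n (by rw [hroot, hea])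
  exact le_of_mul_eq (hr n) (le_one_of_pow_le_one (hr n) ((hroot n).trans_le ha₁)) he he₁ her

theorem IsDLimit.re_le {τ : A →L[ℂ] ℂ} (hτ : IsTracialState τ) {b : A} {L : ℝ} (hb₁ : b ≤ 1)
    (h : IsDLimit τ (matrixOneEquiv.symm b) L) : (τ b).re ≤ L := by
  obtain ⟨r, hr, hroot, hL⟩ := h.exists_roots
  refine ge_of_tendsto' hL fun n ↦ hτ.re_mono ?_
  have hr₁ : r n ≤ 1 := le_one_of_pow_le_one (hr n) ((hroot n).trans_le hb₁)
  calc b = r n ^ (n + 1) := (hroot n).symm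
    _ ≤ r n ^ 1 := CStarAlgebra.pow_antitone (hr n) hr₁ (Nat.le_add_left 1 n)
    _ = r n := pow_one _

theorem StrictComparisonAt.cuntzSubequiv (hsc : StrictComparisonAt A 1) {a e b : A} (ha : 0 ≤ a)
    (ha₁ : a ≤ 1) (he : 0 ≤ e) (he₁ : e ≤ 1) (hea : e * a = a) (hb : 0 ≤ b) (hb₁ : b ≤ 1)
    (htrace : ∀ τ : A →L[ℂ] ℂ, IsTracialState τ → τ e < τ b) : CuntzSubequiv a b := by
  have hpos {c : A} (hc : 0 ≤ c) :
      ∃ y : Matrix (Fin 1) (Fin 1) A, matrixOneEquiv.symm c = star y * y := by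
    obtain ⟨y, rfl⟩ := CStarAlgebra.nonneg_iff_eq_star_mul_self.1 hc
    exact ⟨matrixOneEquiv.symm y, by rw [map_mul, map_star]⟩
  have hbelow := hsc _ _ (hpos ha) (hpos hb) fun τ hτ La Lb hLa hLb ↦
    calc La ≤ (τ e).re := hLa.le_re_of_mul_eq hτ ha₁ he he₁ hea
      _ < (τ b).re := (Complex.lt_def.1 (htrace τ hτ)).1
      _ ≤ Lb := hLb.re_le hτ hb₁
  simpa using hbelow.cuntzSubequiv_map matrixOneEquiv

end StrictComparison

section EqualTraces

open Unitary

variable {A : Type} [CStarAlgebra A]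

/-- Every tracial state takes the same positive value on `h(a)` and `h(b)`, for all continuous
`h ≥ 0` with `h 0 = 0` which do not vanish identically on `(0, 1]`. -/
def HaveEqualPositiveTraces (a b : A) : Prop :=
  ∀ τ : A →L[ℂ] ℂ, IsTracialState τ → ∀ h : ℝ → ℝ, Continuous h → (∀ t, 0 ≤ h t) → h 0 = 0 →
    (∃ t ∈ Set.Ioc (0 : ℝ) 1, h t ≠ 0) → τ (cfc h a) = τ (cfc h b) ∧ 0 < τ (cfc h a)

theorem HaveEqualPositiveTraces.symm {a b : A} (hab : HaveEqualPositiveTraces a b) :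
    HaveEqualPositiveTraces b a := by
  intro τ hτ h hcont hnonneg hzero hne
  obtain ⟨heq, hpos⟩ := hab τ hτ h hcont hnonneg hzero hne
  exact ⟨heq.symm, heq ▸ hpos⟩

theorem HaveEqualPositiveTraces.trace_ramp_lt {a b : A} (hab : HaveEqualPositiveTraces a b)
    {τ : A →L[ℂ] ℂ} (hτ : IsTracialState τ) {N i : ℕ} (hi : i + 1 < N) :
    τ (cfc (ramp N i) a) < τ (cfc (ramp N (i + 1)) b) := by
  have hi' : (i : ℝ) + 1 < N := mod_cast hi
  have : (0 : ℝ) ≤ i := Nat.cast_nonneg i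
  have hN : (0 : ℝ) < N := by linarith
  have hzero {j : ℕ} (hj : j < N) : ramp N j 0 = 0 :=
    ramp_eq_zero (by simpa using mod_cast hj)
  have heq : τ (cfc (ramp N i) a) = τ (cfc (ramp N i) b) := by
    refine (hab τ hτ _ (continuous_ramp N i) (ramp_nonneg N i) (hzero (by lia))
      ⟨1, ⟨zero_lt_one, le_rfl⟩, ?_⟩).1
    rw [ramp_eq_one (by linarith)]
    exact one_ne_zero
  have hgap : ramp N (i + 1) ((N - 1 - i) / N) - ramp N i ((N - 1 - i) / N) ≠ 0 := by
    have hcancel : (N : ℝ) * ((N - 1 - i) / N) = N - 1 - i := mul_div_cancel₀ _ hN.ne'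
    rw [ramp_eq_one (by push_cast; linarith), ramp_eq_zero (by linarith), sub_zero]
    exact one_ne_zero
  have hpos : 0 < τ (cfc (fun t ↦ ramp N (i + 1) t - ramp N i t) b) := by
    refine (hab.symm τ hτ _ ((continuous_ramp N _).sub (continuous_ramp N _))
      (fun t ↦ sub_nonneg.2 (ramp_mono N t i.le_succ)) ?_ ⟨(N - 1 - i) / N, ⟨?_, ?_⟩, hgap⟩).2
    · simp [hzero hi, hzero (i.lt_succ_self.trans hi)]
    · exact div_pos (by linarith) hN
    · exact (div_le_one hN).2 (by linarith)
  rw [cfc_sub _ _ _ (continuous_ramp N _).continuousOn (continuous_ramp N _).continuousOn,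
    map_sub, sub_pos] at hpos
  rwa [heq]

variable [PartialOrder A] [StarOrderedRing A]

theorem HaveEqualPositiveTraces.cuntzSubequiv_cfc_ramp {a b : A} (hsc : StrictComparisonAt A 1)
    (hab : HaveEqualPositiveTraces a b) {N i : ℕ} (hi : i + 2 < N) :
    CuntzSubequiv (cfc (ramp N i) a) (cfc (ramp N (i + 2)) b) := by
  have hnonneg (j : ℕ) (c : A) : 0 ≤ cfc (ramp N j) c := cfc_nonneg fun t _ ↦ ramp_nonneg N j t
  have hle_one (j : ℕ) (c : A) : cfc (ramp N j) c ≤ 1 := cfc_le_one _ _ fun t _ ↦ ramp_le_one N j t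
  refine hsc.cuntzSubequiv (hnonneg i a) (hle_one i a) (hnonneg (i + 1) a) (hle_one (i + 1) a) ?_
    (hnonneg (i + 2) b) (hle_one (i + 2) b) fun τ hτ ↦ hab.trace_ramp_lt hτ hi
  exact cfc_ramp_mul_cfc_ramp_of_lt N i.lt_succ_self a

theorem HaveEqualPositiveTraces.exists_unitary_norm_conj_sub_le {a b : A}
    (hab : HaveEqualPositiveTraces a b) (hsr : Dense {x : A | IsUnit x})
    (hsc : StrictComparisonAt A 1) (ha : 0 ≤ a) (ha₁ : ‖a‖ ≤ 1) (hb : 0 ≤ b) (hb₁ : ‖b‖ ≤ 1)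
    {ε : ℝ} (hε : 0 < ε) : ∃ u : unitary A, ‖conjStarAlgAut ℂ A u a - b‖ ≤ ε := by
  let c : ZMod 2 → A := ![a, b]
  have hc : ∀ x, 0 ≤ c x := Fin.forall_fin_two.2 ⟨ha, hb⟩
  have hc₁ : ∀ x, ‖c x‖ ≤ 1 := Fin.forall_fin_two.2 ⟨ha₁, hb₁⟩
  have hcc : ∀ x, HaveEqualPositiveTraces (c x) (c (x + 1)) :=
    Fin.forall_fin_two.2 ⟨hab, hab.symm⟩
  obtain ⟨N, hN⟩ := exists_nat_gt (48 / ε)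
  have hN₀ : (0 : ℝ) < N := (by positivity : (0 : ℝ) < 48 / ε).trans hN
  have hladder : IsLadder fun x i ↦ cfc (ramp N i) (c x) :=
    isLadder_cfc_ramp hc fun x i hi ↦ (hcc x).cuntzSubequiv_cfc_ramp hsc hi
  obtain ⟨u, hu⟩ := hladder.exists_unitary_norm_conj_sub_le hsr (fun x ↦ (hc x).isSelfAdjoint)
    (Nat.cast_pos.1 hN₀) (fun x ↦ sum_cfc_ramp N (hc x) (hc₁ x)) (show 0 < ε / 4 by positivity)
  refine ⟨u, hu.trans ?_⟩
  have hsmall : 24 / (N : ℝ) ≤ ε / 2 := by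
    rw [div_le_iff₀ hN₀]
    linarith [(div_lt_iff₀ hε).1 hN]
  linarith

end EqualTraces

theorem approx_unitarily_equiv_of_traces_eq_general {A : Type} [CStarAlgebra A]
    (hsr : Dense {x : A | IsUnit x})
    (hsc : StrictComparisonAt A 1)
    {a₁ a₂ : A} (hpos₁ : ∃ y, a₁ = star y * y) (hc₁ : ‖a₁‖ ≤ 1)
    (hpos₂ : ∃ y, a₂ = star y * y) (hc₂ : ‖a₂‖ ≤ 1)
    (htr : HaveEqualPositiveTraces a₁ a₂) {ε : ℝ} (hε : 0 < ε) :
    ∃ u ∈ unitary A, ‖u * a₁ * star u - a₂‖ ≤ ε := by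
  let _ : PartialOrder A := CStarAlgebra.spectralOrder A
  have : StarOrderedRing A := CStarAlgebra.spectralOrderedRing A
  obtain ⟨u, hu⟩ := htr.exists_unitary_norm_conj_sub_le hsr hsc
    (CStarAlgebra.nonneg_iff_eq_star_mul_self.2 hpos₁) hc₁
    (CStarAlgebra.nonneg_iff_eq_star_mul_self.2 hpos₂) hc₂ hε
  exact ⟨u, u.2, by simpa using hu⟩

/-- **Lemma 2.1(i) of Tikuisis–White–Winter.** In a unital C*-algebra of stable rank one with
strict comparison of positive elements with respect to bounded traces, two positive
contractions inducing the same (strictly positive) tracial data are approximately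
unitarily equivalent. -/
theorem approx_unitarily_equiv_of_traces_eq {A : Type} [CStarAlgebra A]
    (hsr : Dense {x : A | IsUnit x})
    (hsc : StrictComparison A)
    (a₁ a₂ : A) (hpos₁ : ∃ y, a₁ = star y * y) (hc₁ : ‖a₁‖ ≤ 1)
    (hpos₂ : ∃ y, a₂ = star y * y) (hc₂ : ‖a₂‖ ≤ 1)
    (htr : ∀ (τ : A →L[ℂ] ℂ), IsTracialState τ →
      ∀ h : ℝ → ℝ, Continuous h → (∀ t, 0 ≤ h t) → h 0 = 0 →
        (∃ t ∈ Set.Ioc (0 : ℝ) 1, h t ≠ 0) →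
        τ (cfc h a₁) = τ (cfc h a₂) ∧ 0 < τ (cfc h a₁)) :
    ∀ ε : ℝ, 0 < ε → ∃ u ∈ unitary A, ‖u * a₁ * star u - a₂‖ ≤ ε :=
  fun _ ↦ approx_unitarily_equiv_of_traces_eq_general hsr (hsc 1) hpos₁ hc₁ hpos₂ hc₂ htr
end
end

section
/- Let A be a unital C*-algebra with strict comparison of positive elements with respect to bounded traces. Suppose a₁, a₂ ∈ A are positive contractions such that for every tracial state τ on A and every nonzero continuous function h : [0,1] → [0,∞) with h(0) = 0 one has τ(h(a₁)) = τ(h(a₂)) > 0. Then for every nonzero continuous h : [0,1] → [0,∞) with h(0) = 0, the elements h(a₁) and h(a₂) are Cuntz equivalent in A. -/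
open scoped ComplexOrder ENNReal

set_option synthInstance.maxHeartbeats 1000000
set_option maxHeartbeats 1000000

noncomputable section

/-- `a` is Cuntz below `b` in a C*-algebra: `a = lim xₙ b xₙ*`. -/
def CuntzBelow {B : Type} [NonUnitalNormedRing B] [StarRing B] (a b : B) : Prop :=
  ∃ x : ℕ → B,
    Filter.Tendsto (fun n => ‖a - x n * b * star (x n)‖) Filter.atTop (nhds 0)

/-!
Since `c ≾ d` is a closed condition on `c`, it suffices to compare the cut-downs `(h(a₁) - ε)₊` with
`h(a₂)`. The trace hypothesis applied to the powers `h ^ (1/n)` gives `d_τ(h(a₁)) = d_τ(h(a₂))`.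
Choose a bump function `g` supported in `(0, ε)`. On `[0, ∞)` one has `(t - ε)₊ ^ s + g(t) ≤ t ^ s`
for all `0 < s ≤ 1`, so `d_τ((h(a₁) - ε)₊) + τ(g(h(a₁))) ≤ d_τ(h(a₁))`. By the intermediate value
theorem `g ∘ h` is nonzero on `(0, 1]`, so the second summand is positive and strict comparison
applies.
-/

open Filter Set Topology

section CuntzSubequivalence

theorem cuntzBelow_iff_mem_closure {B : Type} [NonUnitalNormedRing B] [StarRing B] {a b : B} :
    CuntzBelow a b ↔ a ∈ closure (range fun x : B => x * b * star x) := by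
  simp only [CuntzBelow, norm_sub_rev a, ← tendsto_iff_norm_sub_tendsto_zero]
  rw [mem_closure_iff_seq_limit]
  constructor
  · rintro ⟨x, hx⟩
    exact ⟨fun n => x n * b * star (x n), fun n => mem_range_self (x n), hx⟩
  · rintro ⟨y, hy, hlim⟩
    choose x hx using hy
    exact ⟨x, by simpa only [hx] using hlim⟩

theorem isClosed_setOf_cuntzBelow {B : Type} [NonUnitalNormedRing B] [StarRing B] (b : B) :
    IsClosed {a : B | CuntzBelow a b} := by
  simp only [cuntzBelow_iff_mem_closure, ofPred_mem_eq, isClosed_closure]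

theorem cstarNorm_eq_norm {A : Type} [CStarAlgebra A] (a : A) : cstarNorm a = ‖a‖ := by
  rw [cstarNorm, (IsSelfAdjoint.star_mul_self a).toReal_spectralRadius_complex_eq_norm,
    CStarRing.norm_star_mul_self, Real.sqrt_mul_self (norm_nonneg a)]

variable {B C : Type} [Ring B] [StarRing B] [Algebra ℂ B] [Ring C] [StarRing C] [Algebra ℂ C]

theorem cstarNorm_map (e : B ≃⋆ₐ[ℂ] C) (a : B) : cstarNorm (e a) = cstarNorm a := by
  simp only [cstarNorm, spectralRadius, ← map_star, ← map_mul, AlgEquiv.spectrum_eq e]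

theorem CuntzBelowIn.map {a b : B} (hab : CuntzBelowIn a b) (e : B ≃⋆ₐ[ℂ] C) :
    CuntzBelowIn (e a) (e b) := by
  obtain ⟨x, hx⟩ := hab
  refine ⟨fun n => e (x n), ?_⟩
  simpa only [← map_star, ← map_mul, ← map_sub, cstarNorm_map] using hx

theorem CuntzBelowIn.cuntzBelow {A : Type} [CStarAlgebra A] {a b : A} (hab : CuntzBelowIn a b) :
    CuntzBelow a b := by
  simpa only [CuntzBelow, CuntzBelowIn, cstarNorm_eq_norm] using hab

end CuntzSubequivalence

/-- The `*`-isomorphism between the matrices indexed by a one-point type and their entries, through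
which strict comparison for `1 × 1` matrices becomes a statement about `A` itself. -/
def matrixUniqueStarAlgEquiv (R m A : Type*) [Unique m] [Fintype m] [NonUnitalNonAssocSemiring A]
    [Star A] [SMul R A] : Matrix m m A ≃⋆ₐ[R] A where
  __ := Matrix.uniqueEquiv
  map_mul' := by simp [Matrix.mul_apply]
  map_add' _ _ := rfl
  map_star' _ := rfl
  map_smul' _ _ := rfl

section ScalarFunctions

/-- The function `t ↦ (t - ε)₊`, whose functional calculus gives the cut-downs `(a - ε)₊`. -/
def cutDown (ε t : ℝ) : ℝ := max (t - ε) 0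

/-- A bump function supported in `(0, ε)`, which measures what `cutDown ε` removes from the trace.
The bound by `1` makes it lie below every root `t ^ s`, `0 < s ≤ 1`. -/
def gapBump (ε t : ℝ) : ℝ := max (min (min t 1) (ε - t)) 0

@[fun_prop]
theorem continuous_cutDown (ε : ℝ) : Continuous (cutDown ε) := by
  unfold cutDown; fun_prop

@[fun_prop]
theorem continuous_gapBump (ε : ℝ) : Continuous (gapBump ε) := by
  unfold gapBump; fun_prop

theorem cutDown_nonneg (ε t : ℝ) : 0 ≤ cutDown ε t := le_max_right _ _

theorem gapBump_nonneg (ε t : ℝ) : 0 ≤ gapBump ε t := le_max_right _ _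

theorem gapBump_zero (ε : ℝ) : gapBump ε 0 = 0 := by simp [gapBump]

theorem gapBump_pos {ε t : ℝ} (ht : 0 < t) (htε : t < ε) : 0 < gapBump ε t :=
  lt_max_of_lt_left (lt_min (lt_min ht one_pos) (sub_pos.2 htε))

theorem abs_sub_cutDown_le {ε t : ℝ} (hε : 0 ≤ ε) (ht : 0 ≤ t) : |t - cutDown ε t| ≤ ε := by
  grind [cutDown]

theorem min_one_le_rpow {s t : ℝ} (hs : 0 ≤ s) (hs1 : s ≤ 1) (ht : 0 ≤ t) : min t 1 ≤ t ^ s := by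
  rcases le_total t 1 with ht1 | ht1
  · exact (min_le_left t 1).trans (Real.self_le_rpow_of_le_one ht ht1 hs1)
  · exact (min_le_right t 1).trans (Real.one_le_rpow ht1 hs)

theorem cutDown_rpow_add_gapBump_le {ε s t : ℝ} (hε : 0 ≤ ε) (hs : 0 < s) (hs1 : s ≤ 1)
    (ht : 0 ≤ t) : cutDown ε t ^ s + gapBump ε t ≤ t ^ s := by
  rcases le_total t ε with htε | hεt
  · have hcut : cutDown ε t = 0 := max_eq_right (sub_nonpos.2 htε)
    have hgap : gapBump ε t ≤ min t 1 := max_le (min_le_left _ _) (le_min ht zero_le_one)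
    rw [hcut, Real.zero_rpow hs.ne', zero_add]
    exact hgap.trans (min_one_le_rpow hs.le hs1 ht)
  · have hcut : cutDown ε t ≤ t := max_le (sub_le_self t hε) ht
    have hgap : gapBump ε t = 0 := max_eq_right ((min_le_right _ _).trans (sub_nonpos.2 hεt))
    rw [hgap, add_zero]
    exact Real.rpow_le_rpow (cutDown_nonneg ε t) hcut hs.le

end ScalarFunctions

section FunctionalCalculus

variable {A : Type*} [CStarAlgebra A] [PartialOrder A] [StarOrderedRing A] {a : A}

theorem norm_sub_cfc_cutDown_le (ha : 0 ≤ a) {ε : ℝ} (hε : 0 ≤ ε) :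
    ‖a - cfc (cutDown ε) a‖ ≤ ε := by
  have hsub : a - cfc (cutDown ε) a = cfc (fun t => t - cutDown ε t) a := by
    rw [cfc_sub _ _ a, cfc_id' ℝ a]
  rw [hsub]
  exact norm_cfc_le hε fun t ht => abs_sub_cutDown_le hε (spectrum_nonneg_of_nonneg ha ht)

theorem tendsto_cfc_cutDown (ha : 0 ≤ a) :
    Tendsto (fun ε => cfc (cutDown ε) a) (𝓝[>] 0) (𝓝 a) := by
  rw [tendsto_iff_norm_sub_tendsto_zero]
  refine squeeze_zero' (.of_forall fun _ => norm_nonneg _) ?_ (tendsto_id.mono_left inf_le_left)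
  filter_upwards [self_mem_nhdsWithin] with ε hε
  exact norm_sub_rev a _ ▸ norm_sub_cfc_cutDown_le ha (le_of_lt hε)

theorem cfc_rpow_of_nonneg (ha : IsSelfAdjoint a) {f : ℝ → ℝ} (hf : Continuous f)
    (hf0 : ∀ t, 0 ≤ f t) {s : ℝ} (hs : 0 ≤ s) : cfc f a ^ s = cfc (fun t => f t ^ s) a := by
  have hcont : Continuous fun t : ℝ => t ^ s := Real.continuous_rpow_const hs
  rw [CFC.rpow_eq_cfc_real (cfc_nonneg fun t _ => hf0 t),
    cfc_comp' (· ^ s) f a hcont.continuousOn hf.continuousOn ha]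

theorem eq_rpow_inv_of_pow_eq {r : A} {n : ℕ} (hn : n ≠ 0) (hr : 0 ≤ r) (hra : r ^ n = a) :
    r = a ^ (n : ℝ)⁻¹ := by
  rw [← hra, ← CFC.rpow_natCast r n, CFC.rpow_rpow_of_exponent_nonneg r _ _ (by positivity)
    (by positivity), mul_inv_cancel₀ (Nat.cast_ne_zero.2 hn), CFC.rpow_one r]

theorem cfc_cutDown_rpow_add_cfc_gapBump_le (ha : 0 ≤ a) {ε s : ℝ} (hε : 0 ≤ ε) (hs : 0 < s)
    (hs1 : s ≤ 1) : cfc (cutDown ε) a ^ s + cfc (gapBump ε) a ≤ a ^ s := by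
  have hcont {f : ℝ → ℝ} (hf : Continuous f) : Continuous fun t => f t ^ s :=
    hf.rpow_const fun _ => .inr hs.le
  rw [cfc_rpow_of_nonneg ha.isSelfAdjoint (continuous_cutDown ε) (cutDown_nonneg ε) hs.le,
    ← cfc_add a _ _ (hcont (continuous_cutDown ε)).continuousOn, CFC.rpow_eq_cfc_real ha]
  refine cfc_mono (fun t ht => ?_)
    ((hcont (continuous_cutDown ε)).add (continuous_gapBump ε)).continuousOn
    (hcont continuous_id).continuousOn
  exact cutDown_rpow_add_gapBump_le hε hs hs1 (spectrum_nonneg_of_nonneg ha ht)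

end FunctionalCalculus

section StrictComparison

variable {A : Type} [CStarAlgebra A] [PartialOrder A] [StarOrderedRing A] {a b : A}

theorem IsTracialState.monotone {τ : A →L[ℂ] ℂ} (hτ : IsTracialState τ) : Monotone τ := by
  intro a b hab
  have hnonneg := hτ.2.1 _ (CStarAlgebra.nonneg_iff_eq_star_mul_self.1 (sub_nonneg.2 hab))
  exact sub_nonneg.1 (map_sub τ b a ▸ hnonneg)

theorem IsDLimit.tendsto_rpow {m : Matrix (Fin 1) (Fin 1) A} {τ : A →L[ℂ] ℂ} {L : ℝ}
    (hL : IsDLimit τ m L) :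
    Tendsto (fun n : ℕ => τ (m 0 0 ^ ((n + 1 : ℕ) : ℝ)⁻¹)) atTop (𝓝 (L : ℂ)) := by
  obtain ⟨r, hr, hlim⟩ := hL
  refine hlim.congr fun n => ?_
  obtain ⟨⟨y, hy⟩, hpow⟩ := hr n
  let e := matrixUniqueStarAlgEquiv ℂ (Fin 1) A
  have hroot_nonneg : 0 ≤ e (r n) := by
    rw [hy, map_mul, map_star]
    exact star_mul_self_nonneg (e y)
  have hroot_pow : e (r n) ^ (n + 1) = e m := by rw [← map_pow, hpow]
  rw [Fin.sum_univ_one]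
  exact congrArg τ (eq_rpow_inv_of_pow_eq n.succ_ne_zero hroot_nonneg hroot_pow)

theorem StrictComparison.cuntzBelow_of_forall_lt (hsc : StrictComparison A) (ha : 0 ≤ a)
    (hb : 0 ≤ b)
    (hlt : ∀ τ : A →L[ℂ] ℂ, IsTracialState τ → ∀ La Lb : ℝ,
      Tendsto (fun n : ℕ => τ (a ^ ((n + 1 : ℕ) : ℝ)⁻¹)) atTop (𝓝 (La : ℂ)) →
      Tendsto (fun n : ℕ => τ (b ^ ((n + 1 : ℕ) : ℝ)⁻¹)) atTop (𝓝 (Lb : ℂ)) → La < Lb) :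
    CuntzBelow a b := by
  let e := matrixUniqueStarAlgEquiv ℂ (Fin 1) A
  have exists_star_mul_self {c : A} (hc : 0 ≤ c) : ∃ y, e.symm c = star y * y := by
    obtain ⟨y, rfl⟩ := CStarAlgebra.nonneg_iff_eq_star_mul_self.1 hc
    exact ⟨e.symm y, by rw [map_mul, map_star]⟩
  have hmatrix : CuntzBelowIn (e.symm a) (e.symm b) :=
    hsc 1 _ _ (exists_star_mul_self ha) (exists_star_mul_self hb) fun τ hτ La Lb hLa hLb =>
      hlt τ hτ La Lb hLa.tendsto_rpow hLb.tendsto_rpow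
  simpa only [StarAlgEquiv.apply_symm_apply] using (hmatrix.map e).cuntzBelow

theorem StrictComparison.cuntzBelow_of_rpow_le_of_gapBump_pos (hsc : StrictComparison A)
    (ha : 0 ≤ a) (hb : 0 ≤ b)
    (hle : ∀ τ : A →L[ℂ] ℂ, IsTracialState τ → ∀ s : ℝ, 0 < s → τ (a ^ s) ≤ τ (b ^ s))
    (hpos : ∀ τ : A →L[ℂ] ℂ, IsTracialState τ → ∀ ε : ℝ, 0 < ε → 0 < τ (cfc (gapBump ε) a)) :
    CuntzBelow a b := by
  suffices hcut : ∀ᶠ ε in 𝓝[>] (0 : ℝ), CuntzBelow (cfc (cutDown ε) a) b from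
    (isClosed_setOf_cuntzBelow b).mem_of_tendsto (tendsto_cfc_cutDown ha) hcut
  filter_upwards [self_mem_nhdsWithin] with ε hε
  refine hsc.cuntzBelow_of_forall_lt (cfc_nonneg fun t _ => cutDown_nonneg ε t) hb
    fun τ hτ La Lb hLa hLb => ?_
  have hgap (n : ℕ) : τ (cfc (cutDown ε) a ^ ((n + 1 : ℕ) : ℝ)⁻¹) + τ (cfc (gapBump ε) a)
      ≤ τ (b ^ ((n + 1 : ℕ) : ℝ)⁻¹) := by
    have hs : 0 < ((n + 1 : ℕ) : ℝ)⁻¹ := by positivity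
    have hs1 : ((n + 1 : ℕ) : ℝ)⁻¹ ≤ 1 := Nat.cast_inv_le_one (n + 1)
    rw [← map_add]
    exact (hτ.monotone (cfc_cutDown_rpow_add_cfc_gapBump_le ha (le_of_lt hε) hs hs1)).trans
      (hle τ hτ _ hs)
  have hlim : (La : ℂ) + τ (cfc (gapBump ε) a) ≤ Lb :=
    le_of_tendsto_of_tendsto' (hLa.add_const _) hLb hgap
  exact Complex.real_lt_real.1 ((lt_add_of_pos_right _ (hpos τ hτ ε hε)).trans_le hlim)

end StrictComparison

section TracialData

variable {A : Type} [CStarAlgebra A] {a b : A} {h : ℝ → ℝ}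

/-- The elements `a` and `b` have equal and strictly positive tracial data: every tracial state
takes the same positive value at `h(a)` and `h(b)`, for each nonzero `h : [0, 1] → [0, ∞)` vanishing
at `0`. Such an `h` is encoded as a function on `ℝ` not vanishing identically on `(0, 1]`. -/
def SamePositiveTraces (a b : A) : Prop :=
  ∀ τ : A →L[ℂ] ℂ, IsTracialState τ →
    ∀ h : ℝ → ℝ, Continuous h → (∀ t, 0 ≤ h t) → h 0 = 0 →
      (∃ t ∈ Ioc (0 : ℝ) 1, h t ≠ 0) → τ (cfc h a) = τ (cfc h b) ∧ 0 < τ (cfc h a)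

namespace SamePositiveTraces

theorem symm (hab : SamePositiveTraces a b) : SamePositiveTraces b a := by
  intro τ hτ h hcont hnonneg hzero hne
  obtain ⟨heq, hpos⟩ := hab τ hτ h hcont hnonneg hzero hne
  exact ⟨heq.symm, heq ▸ hpos⟩

variable {τ : A →L[ℂ] ℂ}

theorem trace_cfc_rpow_eq [PartialOrder A] [StarOrderedRing A] (hab : SamePositiveTraces a b)
    (ha : IsSelfAdjoint a) (hb : IsSelfAdjoint b) (hτ : IsTracialState τ) (hcont : Continuous h)
    (hnonneg : ∀ t, 0 ≤ h t) (hzero : h 0 = 0) (hne : ∃ t ∈ Ioc (0 : ℝ) 1, h t ≠ 0) {s : ℝ}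
    (hs : 0 < s) : τ (cfc h a ^ s) = τ (cfc h b ^ s) := by
  rw [cfc_rpow_of_nonneg ha hcont hnonneg hs.le, cfc_rpow_of_nonneg hb hcont hnonneg hs.le]
  obtain ⟨t, ht, hht⟩ := hne
  refine (hab τ hτ _ (hcont.rpow_const fun _ => .inr hs.le)
    (fun t => Real.rpow_nonneg (hnonneg t) s) ?_ ⟨t, ht, ?_⟩).1
  · rw [hzero, Real.zero_rpow hs.ne']
  · exact (Real.rpow_ne_zero (hnonneg t) hs.ne').2 hht

theorem trace_cfc_gapBump_pos (hab : SamePositiveTraces a b) (ha : IsSelfAdjoint a)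
    (hτ : IsTracialState τ) (hcont : Continuous h) (hnonneg : ∀ t, 0 ≤ h t) (hzero : h 0 = 0)
    (hne : ∃ t ∈ Ioc (0 : ℝ) 1, h t ≠ 0) {ε : ℝ} (hε : 0 < ε) :
    0 < τ (cfc (gapBump ε) (cfc h a)) := by
  obtain ⟨t, ht, hht⟩ := hne
  have hval : min (ε / 2) (h t) ∈ Ioc (h 0) (h t) :=
    ⟨hzero.trans_lt (lt_min (half_pos hε) ((hnonneg t).lt_of_ne' hht)), min_le_right _ _⟩
  obtain ⟨u, hu, hhu⟩ := intermediate_value_Ioc ht.1.le hcont.continuousOn hval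
  have hgap : 0 < gapBump ε (h u) :=
    gapBump_pos (hhu ▸ hzero ▸ hval.1) (hhu ▸ (min_le_left _ _).trans_lt (half_lt_self hε))
  rw [← cfc_comp' (gapBump ε) h a]
  exact (hab τ hτ _ ((continuous_gapBump ε).comp hcont) (fun t => gapBump_nonneg ε (h t))
    ((congrArg (gapBump ε) hzero).trans (gapBump_zero ε)) ⟨u, ⟨hu.1, hu.2.trans ht.2⟩, hgap.ne'⟩).2

theorem cuntzBelow_cfc (hab : SamePositiveTraces a b) (hsc : StrictComparison A)
    (ha : IsSelfAdjoint a) (hb : IsSelfAdjoint b) (hcont : Continuous h) (hnonneg : ∀ t, 0 ≤ h t)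
    (hzero : h 0 = 0) (hne : ∃ t ∈ Ioc (0 : ℝ) 1, h t ≠ 0) :
    CuntzBelow (cfc h a) (cfc h b) := by
  let _ := CStarAlgebra.spectralOrder A
  have _ := CStarAlgebra.spectralOrderedRing A
  exact hsc.cuntzBelow_of_rpow_le_of_gapBump_pos
    (cfc_nonneg fun t _ => hnonneg t) (cfc_nonneg fun t _ => hnonneg t)
    (fun τ hτ s hs => (hab.trace_cfc_rpow_eq ha hb hτ hcont hnonneg hzero hne hs).le)
    (fun τ hτ ε hε => hab.trace_cfc_gapBump_pos ha hτ hcont hnonneg hzero hne hε)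

end SamePositiveTraces

end TracialData

theorem cuntz_equivalent_of_traces_eq_general {A : Type} [CStarAlgebra A]
    (hsc : StrictComparison A) {a₁ a₂ : A} (ha₁ : IsSelfAdjoint a₁) (ha₂ : IsSelfAdjoint a₂)
    (htr : SamePositiveTraces a₁ a₂) (h : ℝ → ℝ) (hcont : Continuous h) (hnonneg : ∀ t, 0 ≤ h t)
    (hzero : h 0 = 0) (hne : ∃ t ∈ Ioc (0 : ℝ) 1, h t ≠ 0) :
    CuntzBelow (cfc h a₁) (cfc h a₂) ∧ CuntzBelow (cfc h a₂) (cfc h a₁) :=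
  ⟨htr.cuntzBelow_cfc hsc ha₁ ha₂ hcont hnonneg hzero hne,
    htr.symm.cuntzBelow_cfc hsc ha₂ ha₁ hcont hnonneg hzero hne⟩

/-- **Part of the proof of Lemma 2.1 of Tikuisis–White–Winter.** In a unital C*-algebra with
strict comparison of positive elements with respect to bounded traces, if two positive
contractions have the same (strictly positive) tracial data, then `h(a₁)` and `h(a₂)` are
Cuntz equivalent for every nonzero continuous `h : [0,1] → [0,∞)` with `h(0) = 0`. -/
theorem cuntz_equivalent_of_traces_eq {A : Type} [CStarAlgebra A]
    (hsc : StrictComparison A)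
    (a₁ a₂ : A) (hpos₁ : ∃ y, a₁ = star y * y) (hc₁ : ‖a₁‖ ≤ 1)
    (hpos₂ : ∃ y, a₂ = star y * y) (hc₂ : ‖a₂‖ ≤ 1)
    (htr : ∀ (τ : A →L[ℂ] ℂ), IsTracialState τ →
      ∀ h : ℝ → ℝ, Continuous h → (∀ t, 0 ≤ h t) → h 0 = 0 →
        (∃ t ∈ Set.Ioc (0 : ℝ) 1, h t ≠ 0) →
        τ (cfc h a₁) = τ (cfc h a₂) ∧ 0 < τ (cfc h a₁)) :
    ∀ h : ℝ → ℝ, Continuous h → (∀ t, 0 ≤ h t) → h 0 = 0 →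
      (∃ t ∈ Set.Ioc (0 : ℝ) 1, h t ≠ 0) →
      CuntzBelow (cfc h a₁) (cfc h a₂) ∧ CuntzBelow (cfc h a₂) (cfc h a₁) := by
  obtain ⟨y₁, rfl⟩ := hpos₁
  obtain ⟨y₂, rfl⟩ := hpos₂
  exact cuntz_equivalent_of_traces_eq_general hsc (.star_mul_self y₁) (.star_mul_self y₂) htr
end
end

section
/- Let A be a unital C*-algebra with strict comparison of positive elements with respect to bounded traces, and let a ∈ A be a positive contraction. If m ∈ ℕ satisfies τ(a) > 2/m for every tracial state τ on A, then there exist m² contractions v₁, …, v_{m²} ∈ A such that 1 = Σ_{i=1}^{m²} v_i a v_i*. -/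
open scoped ComplexOrder ENNReal

set_option synthInstance.maxHeartbeats 1000000
set_option maxHeartbeats 1000000

noncomputable section

/-!
Let `b = (a - 1/m)₊`. Every tracial state satisfies `d_τ(b) ≥ τ(b) > 1/m`, so strict comparison
puts the rank-one projection `e₁₁` Cuntz below `b ⊗ 1ₘ`; correcting an approximate factorisation
of its corner by an inverse square root gives `1 = ∑ⱼ yⱼ b yⱼ*` with `m` summands. Functional
calculus writes `b = g a g` with `g² ≤ m b`, so `‖yⱼ g‖² ≤ m`, and splitting each summand
`(yⱼ g) a (yⱼ g)*` into `m` equal parts produces contractions. Cutting down by `1/l` and comparing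
in `k × k` matrices separates the two roles of `m`.
-/

open CStarMatrix (ofMatrixStarAlgEquiv)

lemma exists_continuous_cutdown {ε : ℝ} (hε : 0 < ε) :
    ∃ f : ℝ → ℝ, Continuous f ∧ (∀ t, t - ε ≤ f t * t * f t) ∧ (∀ t, 0 ≤ t → f t * t * f t ≤ t) ∧
      ∀ t, ε * (f t * f t) ≤ f t * t * f t := by
  -- Chosen so that `f t * t * f t = max (t - ε) 0` for `0 ≤ t`.
  let f : ℝ → ℝ := fun t => √(1 - ε / max t ε)
  have max_pos (t : ℝ) : 0 < max t ε := lt_max_of_lt_right hε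
  have sq_f (t : ℝ) : f t * f t = 1 - ε / max t ε :=
    Real.mul_self_sqrt <| sub_nonneg.mpr <| (div_le_one (max_pos t)).mpr (le_max_right t ε)
  have conjugate_eq (t : ℝ) : f t * t * f t = t - t / max t ε * ε := by
    rw [mul_right_comm, sq_f]; ring
  refine ⟨f, ?_, fun t => ?_, fun t ht => ?_, fun t => ?_⟩
  · exact Real.continuous_sqrt.comp <| continuous_const.sub <|
      continuous_const.div (by fun_prop) fun t => (max_pos t).ne'
  · rw [conjugate_eq]
    gcongr
    exact mul_le_of_le_one_left hε.le <| (div_le_one (max_pos t)).mpr (le_max_left t ε)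
  · rw [conjugate_eq, sub_le_self_iff]
    have := max_pos t
    positivity
  · rw [mul_right_comm, mul_comm ε]
    rcases le_total t ε with h | h
    · simp [sq_f, max_eq_right h, hε.ne']
    · exact mul_le_mul_of_nonneg_left h (mul_self_nonneg _)

section PositiveElements

variable {A : Type*} [CStarAlgebra A] [PartialOrder A] [StarOrderedRing A]

lemma eq_of_pow_eq_pow_of_nonneg {a b : A} (ha : 0 ≤ a) (hb : 0 ≤ b) {n : ℕ} (hn : n ≠ 0)
    (h : a ^ n = b ^ n) : a = b := by
  have rpow_inv_pow {c : A} (hc : 0 ≤ c) : (c ^ n) ^ (n⁻¹ : ℝ) = c := by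
    rw [← CFC.rpow_natCast c n, CFC.rpow_rpow_of_exponent_nonneg c n _ (by positivity)
      (by positivity), mul_inv_cancel₀ (Nat.cast_ne_zero.mpr hn), CFC.rpow_one c]
  rw [← rpow_inv_pow ha, h, rpow_inv_pow hb]

lemma pow_le_self_of_pow_le_one {a : A} (ha : 0 ≤ a) {n : ℕ} (hn : n ≠ 0) (h : a ^ n ≤ 1) :
    a ^ n ≤ a := by
  have pow_le_one : ∀ t ∈ spectrum ℝ a, t ^ n ≤ 1 := by
    rwa [← cfc_pow_id (R := ℝ) a n, cfc_le_one_iff (fun t : ℝ => t ^ n) a] at h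
  rw [← cfc_pow_id (R := ℝ) a n]
  nth_rw 2 [← cfc_id' ℝ a]
  refine cfc_mono fun t ht => ?_
  have ht0 : 0 ≤ t := spectrum_nonneg_of_nonneg ha ht
  exact pow_le_of_le_one ht0 ((pow_le_one_iff_of_nonneg ht0 hn).mp (pow_le_one t ht)) hn

lemma exists_isSelfAdjoint_conjugate_cutdown {a : A} (ha : 0 ≤ a) {ε : ℝ} (hε : 0 < ε) :
    ∃ g : A, IsSelfAdjoint g ∧ a - algebraMap ℝ A ε ≤ g * a * g ∧ g * a * g ≤ a ∧
      ε • (g * g) ≤ g * a * g := by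
  obtain ⟨f, hf, sub_le, le_self, mul_le⟩ := exists_continuous_cutdown hε
  have conjugate_eq : cfc f a * a * cfc f a = cfc (fun t => f t * t * f t) a := by
    rw [cfc_mul (fun t => f t * t) f a, cfc_mul f (fun t => t) a, cfc_id' ℝ a]
  refine ⟨cfc f a, cfc_predicate f a, ?_, ?_, ?_⟩ <;> rw [conjugate_eq]
  · calc a - algebraMap ℝ A ε = cfc (fun t => t - ε) a := by
          rw [cfc_sub (fun t => t) (fun _ => ε) a, cfc_id' ℝ a, cfc_const ε a]
      _ ≤ cfc (fun t => f t * t * f t) a := cfc_mono fun t _ => sub_le t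
  · calc cfc (fun t => f t * t * f t) a ≤ cfc (fun t => t) a :=
          cfc_mono fun t ht => le_self t (spectrum_nonneg_of_nonneg ha ht)
      _ = a := cfc_id' ℝ a
  · calc ε • (cfc f a * cfc f a) = cfc (fun t => ε • (f t * f t)) a := by
          rw [cfc_smul ε (fun t => f t * f t) a, cfc_mul f f a]
      _ ≤ cfc (fun t => f t * t * f t) a := cfc_mono fun t _ => mul_le t

lemma exists_conjugate_eq_one_of_norm_one_sub_lt_one {c : A} (hc : 0 ≤ c) (h : ‖1 - c‖ < 1) :
    ∃ q : A, q * c * star q = 1 := by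
  have c_isUnit : IsUnit c := by simpa using isUnit_one_sub_of_norm_lt_one h
  have c_pos : IsStrictlyPositive c := IsStrictlyPositive.iff_of_unital.mpr ⟨hc, c_isUnit⟩
  refine ⟨c ^ (-(1 / 2) : ℝ), ?_⟩
  rw [(IsSelfAdjoint.of_nonneg CFC.rpow_nonneg).star_eq, CFC.conjugate_rpow_neg_one_half c]

lemma norm_mul_sq_le_of_conjugate_le_one {b g y : A} {r : ℝ} (hr : 0 ≤ r)
    (hg : g * star g ≤ r • b) (hy : y * b * star y ≤ 1) : ‖y * g‖ ^ 2 ≤ r := by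
  have : y * g * star (y * g) ≤ algebraMap ℝ A r := calc
    y * g * star (y * g) = y * (g * star g) * star y := by simp only [star_mul, mul_assoc]
    _ ≤ y * (r • b) * star y := star_right_conjugate_le_conjugate hg y
    _ = r • (y * b * star y) := by rw [mul_smul_comm, smul_mul_assoc]
    _ ≤ r • 1 := smul_le_smul_of_nonneg_left hy hr
    _ = algebraMap ℝ A r := (Algebra.algebraMap_eq_smul_one r).symm
  rwa [sq, ← CStarRing.norm_self_mul_star,
    CStarAlgebra.norm_le_iff_le_algebraMap _ hr (mul_star_self_nonneg _)]

end PositiveElements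

lemma exists_contractions_sum_conjugate_eq {A : Type*} [NonUnitalCStarAlgebra A] {k l : ℕ}
    (hl : l ≠ 0) (a : A) (u : Fin k → A) (hu : ∀ j, ‖u j‖ ^ 2 ≤ l) :
    ∃ v : Fin (k * l) → A, (∀ i, ‖v i‖ ≤ 1) ∧
      ∑ i, v i * a * star (v i) = ∑ j, u j * a * star (u j) := by
  have hl0 : (0 : ℝ) < l := by positivity
  refine ⟨fun i => (√(l : ℝ))⁻¹ • u (finProdFinEquiv.symm i).1, fun i => ?_, ?_⟩
  · rw [norm_smul, norm_inv, Real.norm_of_nonneg (Real.sqrt_nonneg _),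
      inv_mul_le_one₀ (Real.sqrt_pos.mpr hl0)]
    exact Real.le_sqrt_of_sq_le (hu _)
  · have conj_smul (w : A) : ((√(l : ℝ))⁻¹ • w) * a * star ((√(l : ℝ))⁻¹ • w) =
        (l : ℝ)⁻¹ • (w * a * star w) := by
      rw [star_smul, star_trivial, smul_mul_assoc, smul_mul_smul_comm, ← mul_inv,
        Real.mul_self_sqrt hl0.le]
    simp only [conj_smul]
    rw [Equiv.sum_comp finProdFinEquiv.symm
      (fun p : Fin k × Fin l => (l : ℝ)⁻¹ • (u p.1 * a * star (u p.1))), Fintype.sum_prod_type]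
    simp only [Finset.sum_const, Finset.card_univ, Fintype.card_fin]
    refine Finset.sum_congr rfl fun j _ => ?_
    rw [← Nat.cast_smul_eq_nsmul ℝ, smul_inv_smul₀ hl0.ne']

section Transfer

variable {B C : Type} [Ring B] [StarRing B] [Algebra ℂ B] [CStarAlgebra C]

lemma cstarNorm_eq_norm_map_s5 (φ : B ≃⋆ₐ[ℂ] C) (b : B) : cstarNorm b = ‖φ b‖ := by
  rw [cstarNorm, spectralRadius, ← AlgEquiv.spectrum_eq φ, ← spectralRadius, map_mul, map_star,
    (IsSelfAdjoint.star_mul_self (φ b)).spectralRadius_eq_nnnorm, ENNReal.coe_toReal, coe_nnnorm,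
    CStarRing.norm_star_mul_self, Real.sqrt_mul_self (norm_nonneg _)]

lemma map_nonneg_iff_exists_eq_star_mul_self [PartialOrder C] [StarOrderedRing C]
    (φ : B ≃⋆ₐ[ℂ] C) {b : B} : 0 ≤ φ b ↔ ∃ y, b = star y * y := by
  rw [CStarAlgebra.nonneg_iff_eq_star_mul_self, (EquivLike.surjective φ).exists]
  exact exists_congr fun y => by rw [← map_star, ← map_mul, EmbeddingLike.apply_eq_iff_eq]

end Transfer

section Matrices

lemma exists_diagonal_eq_star_mul_self {R n : Type*} [NonUnitalSemiring R] [StarRing R] [Fintype n]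
    [DecidableEq n] {b : R} (hb : ∃ y, b = star y * y) :
    ∃ y : Matrix n n R, Matrix.diagonal (fun _ => b) = star y * y := by
  obtain ⟨y, rfl⟩ := hb
  refine ⟨Matrix.diagonal fun _ => y, ?_⟩
  rw [Matrix.star_eq_conjTranspose, Matrix.diagonal_conjTranspose, Matrix.diagonal_mul_diagonal]
  rfl

lemma isStarProjection_single {R n : Type*} [Semiring R] [StarRing R] [Fintype n] [DecidableEq n]
    (i : n) : IsStarProjection (Matrix.single i i (1 : R)) where
  isIdempotentElem := by simp [IsIdempotentElem]
  isSelfAdjoint := by simp [IsSelfAdjoint, Matrix.star_eq_conjTranspose]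

variable {A : Type} [CStarAlgebra A] {k : ℕ}

lemma norm_apply_le_cstarNorm (x : Matrix (Fin k) (Fin k) A) (i j : Fin k) :
    ‖x i j‖ ≤ cstarNorm x := by
  let _ := CStarAlgebra.spectralOrder A
  have _ := CStarAlgebra.spectralOrderedRing A
  rw [cstarNorm_eq_norm_map_s5 ofMatrixStarAlgEquiv]
  exact CStarMatrix.norm_entry_le_norm (M := ofMatrixStarAlgEquiv x)

lemma exists_sum_conjugate_eq_one_of_cuntzBelowIn [PartialOrder A] [StarOrderedRing A] {b : A}
    (hb : 0 ≤ b) {i : Fin k}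
    (h : CuntzBelowIn (Matrix.single i i (1 : A)) (Matrix.diagonal fun _ => b)) :
    ∃ y : Fin k → A, ∑ j, y j * b * star (y j) = 1 := by
  obtain ⟨x, hx⟩ := h
  obtain ⟨n, hn⟩ := (hx.eventually (gt_mem_nhds zero_lt_one)).exists
  set c := ∑ j, x n i j * b * star (x n i j) with c_def
  have corner_eq : (Matrix.single i i (1 : A) -
      x n * Matrix.diagonal (fun _ => b) * star (x n) : Matrix (Fin k) (Fin k) A) i i = 1 - c := by
    rw [Matrix.sub_apply, Matrix.single_apply_same, Matrix.mul_apply]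
    simp only [c_def, Matrix.mul_diagonal, Matrix.star_apply]
  have norm_lt : ‖1 - c‖ < 1 := corner_eq ▸ (norm_apply_le_cstarNorm _ i i).trans_lt hn
  have c_nonneg : 0 ≤ c := Finset.sum_nonneg fun j _ => star_right_conjugate_nonneg hb _
  obtain ⟨q, hq⟩ := exists_conjugate_eq_one_of_norm_one_sub_lt_one c_nonneg norm_lt
  refine ⟨fun j => q * x n i j, ?_⟩
  simp only [← hq, c_def, Finset.mul_sum, Finset.sum_mul, star_mul, mul_assoc]

end Matrices

section Traces

variable {A : Type} [CStarAlgebra A] {τ : A →L[ℂ] ℂ} {k : ℕ} {L : ℝ}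

namespace IsTracialState

lemma map_mono [PartialOrder A] [StarOrderedRing A] (hτ : IsTracialState τ) {a b : A}
    (h : a ≤ b) : τ a ≤ τ b := by
  rw [← sub_nonneg, ← map_sub]
  exact hτ.2.1 _ (CStarAlgebra.nonneg_iff_eq_star_mul_self.mp (sub_nonneg.mpr h))

lemma map_algebraMap (hτ : IsTracialState τ) (r : ℝ) : τ (algebraMap ℝ A r) = r := by
  rw [Algebra.algebraMap_eq_smul_one, ← Complex.coe_smul, map_smul, hτ.1, smul_eq_mul, mul_one]

lemma map_trace_star_mul_self_nonneg {n : Type*} [Fintype n] (hτ : IsTracialState τ)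
    (y : Matrix n n A) : 0 ≤ τ (star y * y).trace := by
  simp only [Matrix.trace, Matrix.diag_apply, Matrix.mul_apply, map_sum]
  exact Finset.sum_nonneg fun i _ => Finset.sum_nonneg fun j _ => hτ.2.1 _ ⟨y j i, rfl⟩

end IsTracialState

lemma sum_map_apply_eq_map_trace {n : Type*} [Fintype n] (τ : A →L[ℂ] ℂ) (x : Matrix n n A) :
    ∑ i, τ (x i i) = τ x.trace :=
  (map_sum τ (fun i => x i i) Finset.univ).symm

namespace IsDLimit

lemma eq_map_trace_of_isStarProjection {p : Matrix (Fin k) (Fin k) A} (hp : IsStarProjection p)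
    (h : IsDLimit τ p L) : L = τ p.trace := by
  let _ := CStarAlgebra.spectralOrder A
  have _ := CStarAlgebra.spectralOrderedRing A
  obtain ⟨r, hr, hL⟩ := h
  have root_eq (n : ℕ) : r n = p := by
    apply ofMatrixStarAlgEquiv.injective
    refine eq_of_pow_eq_pow_of_nonneg
      ((map_nonneg_iff_exists_eq_star_mul_self _).mpr (hr n).1)
      ((map_nonneg_iff_exists_eq_star_mul_self _).mpr ⟨p, ?_⟩) n.succ_ne_zero ?_
    · rw [hp.isSelfAdjoint.star_eq, hp.isIdempotentElem.eq]
    · rw [← map_pow, ← map_pow, (hr n).2, hp.isIdempotentElem.pow_succ_eq]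
  simp only [root_eq, sum_map_apply_eq_map_trace] at hL
  exact tendsto_nhds_unique hL tendsto_const_nhds

lemma map_trace_le {b : Matrix (Fin k) (Fin k) A} (hτ : IsTracialState τ)
    (hb : ∃ y, 1 - b = star y * y) (h : IsDLimit τ b L) : τ b.trace ≤ L := by
  let _ := CStarAlgebra.spectralOrder A
  have _ := CStarAlgebra.spectralOrderedRing A
  obtain ⟨r, hr, hL⟩ := h
  refine ge_of_tendsto' hL fun n => ?_
  have le_root : ofMatrixStarAlgEquiv b ≤ ofMatrixStarAlgEquiv (r n) := by
    rw [← map_nonneg_iff_exists_eq_star_mul_self ofMatrixStarAlgEquiv, map_sub, map_one,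
      sub_nonneg] at hb
    rw [← (hr n).2, map_pow] at hb ⊢
    exact pow_le_self_of_pow_le_one
      ((map_nonneg_iff_exists_eq_star_mul_self _).mpr (hr n).1) n.succ_ne_zero hb
  rw [← sub_nonneg, ← map_sub, map_nonneg_iff_exists_eq_star_mul_self] at le_root
  obtain ⟨y, hy⟩ := le_root
  have trace_nonneg := hτ.map_trace_star_mul_self_nonneg y
  rwa [← hy, Matrix.trace_sub, map_sub, sub_nonneg,
    ← sum_map_apply_eq_map_trace τ (r n)] at trace_nonneg

end IsDLimit

namespace StrictComparison

lemma cuntzBelowIn_of_isStarProjection (hA : StrictComparison A)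
    {p b : Matrix (Fin k) (Fin k) A} (hp : IsStarProjection p) (hb : ∃ y, b = star y * y)
    (hb_le : ∃ y, 1 - b = star y * y)
    (h : ∀ τ : A →L[ℂ] ℂ, IsTracialState τ → τ p.trace < τ b.trace) : CuntzBelowIn p b := by
  refine hA k p b ⟨p, ?_⟩ hb fun τ hτ Lp Lb hLp hLb => ?_
  · rw [hp.isSelfAdjoint.star_eq, hp.isIdempotentElem.eq]
  · rw [← Complex.real_lt_real, hLp.eq_map_trace_of_isStarProjection hp]
    exact (h τ hτ).trans_le (hLb.map_trace_le hτ hb_le)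

lemma exists_sum_conjugate_eq_one [PartialOrder A] [StarOrderedRing A] (hA : StrictComparison A)
    {b : A} (hb : 0 ≤ b) (hb_le : b ≤ 1) (hk : k ≠ 0)
    (h : ∀ τ : A →L[ℂ] ℂ, IsTracialState τ → 1 < k * τ b) :
    ∃ y : Fin k → A, ∑ j, y j * b * star (y j) = 1 := by
  have : NeZero k := ⟨hk⟩
  have one_sub_diagonal : 1 - Matrix.diagonal (fun _ : Fin k => b) =
      Matrix.diagonal fun _ => 1 - b := by
    rw [← Matrix.diagonal_one, Matrix.diagonal_sub]
  refine exists_sum_conjugate_eq_one_of_cuntzBelowIn hb (i := 0) <|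
    hA.cuntzBelowIn_of_isStarProjection (isStarProjection_single 0)
      (exists_diagonal_eq_star_mul_self ?_) (one_sub_diagonal ▸ exists_diagonal_eq_star_mul_self ?_)
      fun τ hτ => ?_
  · exact CStarAlgebra.nonneg_iff_eq_star_mul_self.mp hb
  · exact CStarAlgebra.nonneg_iff_eq_star_mul_self.mp (sub_nonneg.mpr hb_le)
  · rw [Matrix.trace_single_eq_same, hτ.1, Matrix.trace_diagonal, Fin.sum_const, map_nsmul,
      nsmul_eq_mul]
    exact h τ hτ

end StrictComparison

end Traces

theorem one_eq_sum_conjugates_general {A : Type} [CStarAlgebra A] [PartialOrder A]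
    [StarOrderedRing A] (hA : StrictComparison A) {a : A} (ha : 0 ≤ a) (ha_le : a ≤ 1) {k l : ℕ}
    (hk : k ≠ 0) (hl : l ≠ 0)
    (h : ∀ τ : A →L[ℂ] ℂ, IsTracialState τ → ((1 / k + 1 / l : ℝ) : ℂ) < τ a) :
    ∃ v : Fin (k * l) → A, (∀ i, ‖v i‖ ≤ 1) ∧ 1 = ∑ i, v i * a * star (v i) := by
  have hl0 : (0 : ℝ) < l := by positivity
  obtain ⟨g, hg, sub_le, le_a, smul_sq_le⟩ :=
    exists_isSelfAdjoint_conjugate_cutdown ha (one_div_pos.mpr hl0)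
  have cutdown_nonneg : 0 ≤ g * a * g := hg.conjugate_nonneg ha
  have trace_cutdown (τ : A →L[ℂ] ℂ) (hτ : IsTracialState τ) : 1 < k * τ (g * a * g) := by
    have hk0 : (0 : ℂ) < k := by simpa [pos_iff_ne_zero] using hk
    have le_cutdown := hτ.map_mono sub_le
    rw [map_sub, hτ.map_algebraMap] at le_cutdown
    rw [← div_lt_iff₀' hk0]
    exact (lt_sub_iff_add_lt.mpr (by simpa using h τ hτ)).trans_le le_cutdown
  obtain ⟨y, hy⟩ :=
    hA.exists_sum_conjugate_eq_one cutdown_nonneg (le_a.trans ha_le) hk trace_cutdown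
  have norm_sq_le (j : Fin k) : ‖y j * g‖ ^ 2 ≤ l := by
    refine norm_mul_sq_le_of_conjugate_le_one hl0.le (b := g * a * g) ?_ (hy ▸ ?_)
    · rwa [hg.star_eq, ← inv_smul_le_iff_of_pos hl0, ← one_div]
    · exact Finset.single_le_sum (f := fun j => y j * (g * a * g) * star (y j))
        (fun i _ => star_right_conjugate_nonneg cutdown_nonneg _) (Finset.mem_univ j)
  obtain ⟨v, hv, sum_eq⟩ := exists_contractions_sum_conjugate_eq hl a (fun j => y j * g) norm_sq_le
  refine ⟨v, hv, ?_⟩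
  rw [sum_eq, ← hy]
  simp only [star_mul, hg.star_eq, mul_assoc]

/-- **Lemma 2.2 of Tikuisis–White–Winter.** Let `A` be a unital C*-algebra with strict
comparison of positive elements by bounded traces, and let `a ∈ A` be a positive contraction.
If `m ∈ ℕ` satisfies `τ(a) > 2/m` for every tracial state `τ`, then there are `m²`
contractions `v₁, …, v_{m²}` with `1 = Σᵢ vᵢ a vᵢ*`. -/
theorem one_eq_sum_conjugates {A : Type} [CStarAlgebra A]
    (hsc : StrictComparison A)
    (a : A) (hpos : ∃ y, a = star y * y) (hc : ‖a‖ ≤ 1)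
    (m : ℕ) (hm : 0 < m)
    (htr : ∀ (τ : A →L[ℂ] ℂ), IsTracialState τ → ((2 / m : ℝ) : ℂ) < τ a) :
    ∃ v : Fin (m ^ 2) → A, (∀ i, ‖v i‖ ≤ 1) ∧
      (1 : A) = ∑ i, v i * a * star (v i) := by
  let _ := CStarAlgebra.spectralOrder A
  have _ := CStarAlgebra.spectralOrderedRing A
  have ha : 0 ≤ a := CStarAlgebra.nonneg_iff_eq_star_mul_self.mpr hpos
  have ha_le : a ≤ 1 := (CStarAlgebra.norm_le_one_iff_of_nonneg a).mp hc
  rw [sq]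
  refine one_eq_sum_conjugates_general hsc ha ha_le hm.ne' hm.ne' ?_
  simpa only [← add_div, one_add_one_eq_two] using htr
end
end

section
/- Let A be a non-unital C*-algebra and let τ_A be a faithful tracial state on A. Then the functional τ_{A∼} on the minimal unitisation A∼ of A defined by τ_{A∼}(λ1 + a) := λ + τ_A(a) for λ ∈ ℂ and a ∈ A is a faithful tracial state on A∼; in particular, for every nonzero positive element b of A∼ one has τ_{A∼}(b) > 0. -/
open scoped ComplexOrder

set_option synthInstance.maxHeartbeats 1000000
set_option maxHeartbeats 1000000

noncomputable section

/-!
Write `T` for the extension and let `e` run through an approximate unit of `A`.  Then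
`T ((λ1 + a)⋆ (λ1 + a))` is the limit of `τ ((λe + a)⋆ (λe + a)) + |λ|² (1 - τ (e⋆ e))`, and both
summands are nonnegative since `‖τ‖ ≤ 1`; so `T` is positive.  The elements `y` of `A∼` with
`T (y⋆ y) = 0` then form a left ideal, which meets `A` only in `0` because `τ` is faithful.  Hence
such a `y` satisfies `A y = 0`, and this forces `y = 0`: if `y = λ1 + a` with `λ ≠ 0`, then
`-λ⁻¹ a` would be a unit of `A`, and if `λ = 0`, then `a⋆ a = 0`.
-/

open Filter Topology Unitization

section UnitalExtension

variable {R A : Type*} [Semiring R] [AddCommMonoid A] [Module R A]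

/-- The unital extension `λ1 + a ↦ λ + φ a` to the unitisation of a linear functional `φ`. -/
def unitalExtension (φ : A →ₗ[R] R) : Unitization R A →ₗ[R] R where
  toFun x := x.fst + φ x.snd
  map_add' x y := by simp only [fst_add, snd_add, map_add, add_add_add_comm]
  map_smul' r x := by simp only [fst_smul, snd_smul, map_smul, smul_add, RingHom.id_apply]

theorem unitalExtension_apply (φ : A →ₗ[R] R) (x : Unitization R A) :
    unitalExtension φ x = x.fst + φ x.snd :=
  rfl

theorem unitalExtension_one (φ : A →ₗ[R] R) : unitalExtension φ 1 = 1 := by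
  simp [unitalExtension_apply]

theorem unitalExtension_inr (φ : A →ₗ[R] R) (a : A) :
    unitalExtension φ (a : Unitization R A) = φ a := by
  simp [unitalExtension_apply]

end UnitalExtension

section UnitalExtensionMul

variable {R A : Type*} [CommSemiring R] [NonUnitalNonAssocSemiring A] [Module R A]

theorem unitalExtension_tracial_iff (φ : A →ₗ[R] R) :
    (∀ x y, unitalExtension φ (x * y) = unitalExtension φ (y * x)) ↔
      ∀ a b, φ (a * b) = φ (b * a) := by
  refine ⟨fun h a b => ?_, fun h x y => ?_⟩
  · simpa only [← inr_mul, unitalExtension_inr] using h a b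
  · simp only [unitalExtension_apply, fst_mul, snd_mul, map_add, map_smul, h x.snd y.snd]
    ring

theorem unitalExtension_star_mul_self [Star R] [Star A] (φ : A →ₗ[R] R) (y : Unitization R A) :
    unitalExtension φ (star y * y) =
      star y.fst * y.fst + star y.fst * φ y.snd + y.fst * φ (star y.snd) +
        φ (star y.snd * y.snd) := by
  simp only [unitalExtension_apply, fst_mul, snd_mul, fst_star, snd_star, map_add, map_smul,
    smul_eq_mul]
  ring

end UnitalExtensionMul

theorem left_unit_of_right_unit {A : Type*} [Mul A] [StarMul A] {e : A}
    (he : ∀ a, a * e = a) (a : A) : e * a = a := by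
  have star_e_mul (b : A) : star e * b = b := by
    simpa using congrArg star (he (star b))
  have star_e : star e = e := (he (star e)).symm.trans (star_e_mul e)
  simpa only [star_e] using star_e_mul a

theorem eq_zero_of_forall_inr_mul_eq_zero {𝕜 A : Type*} [Field 𝕜] [NonUnitalNormedRing A]
    [StarRing A] [CStarRing A] [Module 𝕜 A] [SMulCommClass 𝕜 A A]
    (hA : ¬∃ e : A, ∀ a : A, e * a = a ∧ a * e = a) {y : Unitization 𝕜 A}
    (hy : ∀ a : A, (a : Unitization 𝕜 A) * y = 0) : y = 0 := by
  have hy_snd (a : A) : y.fst • a + a * y.snd = 0 := by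
    simpa using congrArg (·.snd) (hy a)
  have fst_eq_zero : y.fst = 0 := by
    by_contra hne
    have right_unit (a : A) : a * (-(y.fst)⁻¹ • y.snd) = a := by
      rw [mul_smul_comm, eq_neg_of_add_eq_zero_right (hy_snd a), neg_smul_neg,
        inv_smul_smul₀ hne]
    exact hA ⟨_, fun a => ⟨left_unit_of_right_unit right_unit a, right_unit a⟩⟩
  have snd_eq_zero : y.snd = 0 := by
    simpa [fst_eq_zero] using hy_snd (star y.snd)
  exact Unitization.ext fst_eq_zero snd_eq_zero

theorem map_star_mul_self_le_one {A : Type*} [NonUnitalNormedRing A] [StarRing A] [CStarRing A]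
    [NormedSpace ℂ A] {τ : A →L[ℂ] ℂ} (hτ : ‖τ‖ ≤ 1) {e : A} (hpos : 0 ≤ τ (star e * e))
    (he : ‖e‖ ≤ 1) : τ (star e * e) ≤ 1 := by
  rw [Complex.eq_coe_norm_of_nonneg hpos, ← Complex.ofReal_one, Complex.real_le_real]
  calc ‖τ (star e * e)‖ ≤ 1 * ‖star e * e‖ := τ.le_of_opNorm_le hτ _
    _ = ‖e‖ * ‖e‖ := by rw [one_mul, CStarRing.norm_star_mul_self]
    _ ≤ 1 := mul_le_one₀ he (norm_nonneg e) he

section Positive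

variable {A : Type*} [NonUnitalCStarAlgebra A]

theorem map_star_mul_self_mul_eq_zero (φ : A →ₗ[ℂ] ℂ) (hφ : ∀ a, 0 ≤ φ (star a * a)) {y : A}
    (hy : φ (star y * y) = 0) (x : A) : φ (star (x * y) * (x * y)) = 0 := by
  let _ := CStarAlgebra.spectralOrder A
  have := CStarAlgebra.spectralOrderedRing A
  obtain ⟨z, hz⟩ : ∃ z, ‖star x * x‖ • (star y * y) - star y * (star x * x) * y = star z * z :=
    CStarAlgebra.nonneg_iff_eq_star_mul_self.mp <| sub_nonneg.mpr <|
      CStarAlgebra.star_left_conjugate_le_norm_smul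
  have hxy : star (x * y) * (x * y) = star y * (star x * x) * y := by
    simp only [star_mul, mul_assoc]
  have hφz : φ (star z * z) = -φ (star (x * y) * (x * y)) := by
    rw [← hz, map_sub, ← Complex.coe_smul, map_smul, hy, smul_zero, zero_sub, hxy]
  exact le_antisymm (neg_nonneg.mp (hφz ▸ hφ z)) (hφ _)

variable {τ : A →L[ℂ] ℂ}

theorem unitalExtension_star_mul_self_nonneg (hτ : ‖τ‖ ≤ 1) (hpos : ∀ a, 0 ≤ τ (star a * a))
    (y : Unitization ℂ A) : 0 ≤ unitalExtension (τ : A →ₗ[ℂ] ℂ) (star y * y) := by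
  let _ := CStarAlgebra.spectralOrder A
  have := CStarAlgebra.spectralOrderedRing A
  have approx := CStarAlgebra.increasingApproximateUnit A
  set c := y.fst
  set a := y.snd
  have limit : Tendsto
      (fun e => star c * c + star c * τ (e * a) + c * τ (star a * e) + τ (star a * a))
      (CStarAlgebra.approximateUnit A)
      (𝓝 (unitalExtension (τ : A →ₗ[ℂ] ℂ) (star y * y))) := by
    rw [unitalExtension_star_mul_self]
    have left := (τ.continuous.tendsto a).comp (approx.tendsto_mul_right a)
    have right := (τ.continuous.tendsto (star a)).comp (approx.tendsto_mul_left (star a))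
    exact ((left.const_mul _).const_add _ |>.add (right.const_mul _)).add_const _
  refine ge_of_tendsto limit ?_
  filter_upwards [approx.eventually_star_eq, approx.eventually_norm] with e star_e norm_e
  calc 0 ≤ τ (star (c • e + a) * (c • e + a)) + star c * c * (1 - τ (star e * e)) :=
        add_nonneg (hpos _) <| mul_nonneg (star_mul_self_nonneg c) <|
          sub_nonneg.mpr (map_star_mul_self_le_one hτ (hpos e) norm_e)
    _ = star c * c + star c * τ (e * a) + c * τ (star a * e) + τ (star a * a) := by
      simp only [star_add, star_smul, star_e, add_mul, mul_add, smul_mul_assoc, mul_smul_comm,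
        map_add, map_smul, smul_eq_mul]
      ring

theorem unitalExtension_star_mul_self_pos (hA : ¬∃ e : A, ∀ a : A, e * a = a ∧ a * e = a)
    (hτ : ‖τ‖ ≤ 1) (hfaithful : ∀ a, a ≠ 0 → 0 < τ (star a * a)) {y : Unitization ℂ A}
    (hy : y ≠ 0) : 0 < unitalExtension (τ : A →ₗ[ℂ] ℂ) (star y * y) := by
  have hpos (a : A) : 0 ≤ τ (star a * a) := by
    rcases eq_or_ne a 0 with rfl | ha
    · simp
    · exact (hfaithful a ha).le
  have extension_nonneg := unitalExtension_star_mul_self_nonneg hτ hpos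
  refine (extension_nonneg y).lt_of_ne' fun hzero => hy ?_
  refine eq_zero_of_forall_inr_mul_eq_zero hA fun a => ?_
  obtain ⟨b, hb⟩ : ∃ b : A, (b : Unitization ℂ A) = a * y :=
    ⟨y.fst • a + a * y.snd, by ext <;> simp⟩
  have hτb : τ (star b * b) = 0 := by
    have := map_star_mul_self_mul_eq_zero _ extension_nonneg hzero a
    rwa [← hb, ← inr_star, ← inr_mul, unitalExtension_inr] at this
  have b_eq_zero : b = 0 := by
    by_contra hne
    exact (hfaithful b hne).ne' hτb
  rw [← hb, b_eq_zero, inr_zero]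

end Positive

theorem unitization_trace_faithful_general {A : Type*} [NonUnitalCStarAlgebra A]
    (hA : ¬∃ e : A, ∀ a : A, e * a = a ∧ a * e = a)
    (τ : A →L[ℂ] ℂ) (hnorm : ‖τ‖ ≤ 1)
    (hfaithful : ∀ a : A, (∃ y, a = star y * y) → a ≠ 0 → 0 < τ a) :
    ∀ T : Unitization ℂ A → ℂ,
      (T = fun x => x.fst + τ x.snd) →
      (∀ (c : ℂ) (x y : Unitization ℂ A), T (c • x + y) = c * T x + T y) ∧
      Continuous T ∧
      T 1 = 1 ∧
      (∀ b : Unitization ℂ A, (∃ y, b = star y * y) → 0 ≤ T b) ∧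
      ((∀ x y : Unitization ℂ A, T (x * y) = T (y * x)) ↔ ∀ a b : A, τ (a * b) = τ (b * a)) ∧
      (∀ b : Unitization ℂ A, (∃ y, b = star y * y) → b ≠ 0 → 0 < T b) := by
  intro T hT
  obtain rfl : T = unitalExtension (τ : A →ₗ[ℂ] ℂ) := hT
  have faithful (b : Unitization ℂ A) (hb : ∃ y, b = star y * y) (hne : b ≠ 0) :
      0 < unitalExtension (τ : A →ₗ[ℂ] ℂ) b := by
    obtain ⟨y, rfl⟩ := hb
    refine unitalExtension_star_mul_self_pos hA hnorm (fun a ha => ?_) (right_ne_zero_of_mul hne)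
    exact hfaithful _ ⟨a, rfl⟩ (CStarRing.star_mul_self_ne_zero_iff a |>.mpr ha)
  refine ⟨fun c x y => by rw [map_add, map_smul, smul_eq_mul], ?_, unitalExtension_one _,
    fun b hb => ?_, unitalExtension_tracial_iff _, faithful⟩
  · exact Unitization.continuous_fst.add (τ.continuous.comp Unitization.continuous_snd)
  · rcases eq_or_ne b 0 with rfl | hne
    · rw [map_zero]
    · exact (faithful b hb hne).le

/-- **Remark 1.3(iii) of Tikuisis–White–Winter.** If `τ` is a faithful tracial state on a
non-unital C*-algebra `A`, then the functional `λ1 + a ↦ λ + τ(a)` on the minimal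
unitisation `A∼` is a faithful tracial state: it is linear, continuous, unital, positive,
tracial, and strictly positive on every nonzero positive element of `A∼`. -/
theorem unitization_trace_faithful {A : Type} [NonUnitalCStarAlgebra A]
    (hA : ¬∃ e : A, ∀ a : A, e * a = a ∧ a * e = a)
    (τ : A →L[ℂ] ℂ) (hnorm : ‖τ‖ = 1)
    (hpos : ∀ a : A, (∃ y, a = star y * y) → 0 ≤ τ a)
    (htracial : ∀ a b : A, τ (a * b) = τ (b * a))
    (hfaithful : ∀ a : A, (∃ y, a = star y * y) → a ≠ 0 → 0 < τ a) :
    ∀ T : Unitization ℂ A → ℂ,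
      (T = fun x => x.fst + τ x.snd) →
      (∀ (c : ℂ) (x y : Unitization ℂ A), T (c • x + y) = c * T x + T y) ∧
      Continuous T ∧
      T 1 = 1 ∧
      (∀ b : Unitization ℂ A, (∃ y, b = star y * y) → 0 ≤ T b) ∧
      (∀ x y : Unitization ℂ A, T (x * y) = T (y * x)) ∧
      (∀ b : Unitization ℂ A, (∃ y, b = star y * y) → b ≠ 0 → 0 < T b) := by
  intro T hT
  obtain ⟨linear, continuous, unital, positive, tracial_iff, faithful⟩ :=
    unitization_trace_faithful_general hA τ hnorm.le hfaithful T hT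
  exact ⟨linear, continuous, unital, positive, tracial_iff.mpr htracial, faithful⟩
end
end
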